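/- arXiv:1605.08310 — 17 statements merged into one kernel-verified Lean document; each statement's English description precedes it below -/
import Mathlib

section
/- Duality principle: For every quasi-poset P on [n], the polynomials ehr_P and ehr^str_P satisfy ehr^str_P(X) = (-1)^{cl(P)} · ehr_P(-X), i.e. ehr^str_P equals (-1)^{cl(P)} times the composition of ehr_P with the polynomial -X. -/
open Polynomial

/-- Number of monotone maps `Fin n → Fin k` for the quasi-poset `le` (the set `L_P(k)`). -/
noncomputable def LCount {n : ℕ} (le : Fin n → Fin n → Prop) (k : ℕ) : ℕ :=
  Nat.card {f : Fin n → Fin k // ∀ i j, le i j → f i ≤ f j}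

/-- Number of strictly monotone maps `Fin n → Fin k` (the set `L^str_P(k)`). -/
noncomputable def LstrCount {n : ℕ} (le : Fin n → Fin n → Prop) (k : ℕ) : ℕ :=
  Nat.card {f : Fin n → Fin k //
    (∀ i j, le i j → f i ≤ f j) ∧ (∀ i j, le i j → f i = f j → le j i)}

/-- `cl(P)`: the number of equivalence classes of the equivalence `i ≤_P j ∧ j ≤_P i`. -/
noncomputable def clQP {n : ℕ} (le : Fin n → Fin n → Prop) : ℕ :=
  Nat.card (Quot (fun i j : Fin n => le i j ∧ le j i))

namespace DualAux

theorem strict_count (c k : ℕ) :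
    Nat.card {g : Fin c → Fin k // StrictMono g} = k.choose c := by
  have e : {g : Fin c → Fin k // StrictMono g} ≃ {s : Finset (Fin k) // s.card = c} :=
    { toFun := fun g => ⟨Finset.univ.image g.1, by
        rw [Finset.card_image_of_injective _ g.2.injective]; simp⟩
      invFun := fun s => ⟨s.1.orderEmbOfFin s.2, (s.1.orderEmbOfFin s.2).strictMono⟩
      left_inv := by
        rintro ⟨g, hg⟩
        apply Subtype.ext
        symm
        apply Finset.orderEmbOfFin_unique
        · intro x; simp
        · exact hg
      right_inv := by
        rintro ⟨s, hs⟩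
        apply Subtype.ext
        simp }
  rw [Nat.card_congr e, Nat.card_eq_fintype_card, Fintype.card_finset_len, Fintype.card_fin]

theorem strict_gap {c m : ℕ} (h : Fin c → Fin m) (hh : StrictMono h) (i : ℕ) :
    ∀ d (hd : i + d < c), (h ⟨i, by omega⟩ : ℕ) + d ≤ h ⟨i + d, hd⟩ := by
  intro d
  induction d with
  | zero => intro hd; simp
  | succ d ih =>
    intro hd
    have h1 := ih (by omega)
    have h2 : h ⟨i + d, by omega⟩ < h ⟨i + (d + 1), hd⟩ := hh (by simp [Fin.lt_def])
    rw [Fin.lt_def] at h2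
    omega

theorem weak_count (c k : ℕ) :
    Nat.card {g : Fin c → Fin k // Monotone g} = (k + c - 1).choose c := by
  rw [← strict_count]
  apply Nat.card_congr
  exact
    { toFun := fun g => ⟨fun i => ⟨g.1 i + i, by
          have := (g.1 i).2; have := i.2; omega⟩, by
        intro i j hij
        have := g.2 hij.le
        rw [Fin.le_def] at this
        rw [Fin.lt_def] at hij ⊢
        simp only
        omega⟩
      invFun := fun h => ⟨fun i => ⟨h.1 i - i, by
          have hi := i.2
          have h1 := strict_gap h.1 h.2 i (c - 1 - i) (by omega)
          have h2 := (h.1 ⟨i + (c - 1 - i), by omega⟩).2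
          have h3 := strict_gap h.1 h.2 0 i (by omega)
          simp only [Fin.eta, zero_add] at h1 h3
          omega⟩, by
        intro i j hij
        rw [Fin.le_def] at hij ⊢
        simp only
        have hj := j.2
        have h1 := strict_gap h.1 h.2 i (j - i) (by omega)
        have h2 : (⟨i + (j - i), by omega⟩ : Fin c) = j := by ext; simp; omega
        rw [h2] at h1
        simp only [Fin.eta] at h1
        omega⟩
      left_inv := by
        rintro ⟨g, hg⟩
        ext i
        simp
      right_inv := by
        rintro ⟨h, hh⟩
        ext i
        have h3 := strict_gap h hh 0 i (by simp)
        simp only [Fin.eta, zero_add] at h3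
        simp only
        omega }

theorem exists_rank {n : ℕ} (le : Fin n → Fin n → Prop)
    (hrefl : ∀ i, le i i) (htrans : ∀ i j k, le i j → le j k → le i k)
    (htot : ∀ i j, le i j ∨ le j i) :
    ∃ π : Fin n → Fin (clQP le), Function.Surjective π ∧ ∀ i j, le i j ↔ π i ≤ π j := by
  classical
  let r : Setoid (Fin n) := ⟨fun i j => le i j ∧ le j i,
    ⟨fun i => ⟨hrefl i, hrefl i⟩, fun h => ⟨h.2, h.1⟩,
      fun h h' => ⟨htrans _ _ _ h.1 h'.1, htrans _ _ _ h'.2 h.2⟩⟩⟩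
  let L : LinearOrder (Quot r.r) :=
    { le := fun x y => Quotient.lift₂ (s₁ := r) (s₂ := r) le (by
        intro a b a' b' h h'
        exact propext ⟨fun x => htrans _ _ _ h.2 (htrans _ _ _ x h'.1),
          fun x => htrans _ _ _ h.1 (htrans _ _ _ x h'.2)⟩) x y
      le_refl := fun a => Quotient.inductionOn (s := r) a hrefl
      le_trans := fun a b c => Quotient.inductionOn₃ (s₁ := r) (s₂ := r) (s₃ := r) a b c htrans
      le_antisymm := fun a b => Quotient.inductionOn₂ (s₁ := r) (s₂ := r) a b
        (fun _ _ h h' => Quotient.sound (s := r) ⟨h, h'⟩)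
      le_total := fun a b => Quotient.inductionOn₂ (s₁ := r) (s₂ := r) a b htot
      toDecidableLE := Classical.decRel _ }
  letI : Fintype (Quot r.r) := Fintype.ofFinite _
  have hc : Fintype.card (Quot r.r) = clQP le := by
    rw [← Nat.card_eq_fintype_card]; rfl
  let e := Fintype.orderIsoFinOfCardEq (Quot r.r) hc
  refine ⟨fun i => e.symm (Quot.mk r.r i),
    e.symm.surjective.comp Quot.mk_surjective, fun i j => ?_⟩
  rw [e.symm.le_iff_le]
  rfl

def Good {n : ℕ} (le : Fin n → Fin n → Prop) : Prop :=
  ∃ p : ℚ[X], (∀ k : ℕ, p.eval (k : ℚ) = LCount le k) ∧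
    ∀ k : ℕ, p.eval (-(k : ℚ)) = (-1) ^ clQP le * LstrCount le k

theorem good_total {n : ℕ} (le : Fin n → Fin n → Prop)
    (hrefl : ∀ i, le i i) (htrans : ∀ i j k, le i j → le j k → le i k)
    (htot : ∀ i j, le i j ∨ le j i) : Good le := by
  have hex := exists_rank le hrefl htrans htot
  obtain ⟨c, hc⟩ : ∃ c, c = clQP le := ⟨_, rfl⟩
  rw [← hc] at hex
  obtain ⟨π, hs, hπ⟩ := hex
  have hfac : ∀ k (f : Fin n → Fin k), (∀ i j, le i j → f i ≤ f j) →
      ∃ g : Fin c → Fin k, Monotone g ∧ g ∘ π = f := by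
    intro k f hf
    choose s hs' using hs
    refine ⟨f ∘ s, fun x y hxy => hf _ _ ((hπ _ _).2 (by rwa [hs', hs'])), ?_⟩
    funext i
    exact le_antisymm (hf _ _ ((hπ _ _).2 (by rw [hs']))) (hf _ _ ((hπ _ _).2 (by rw [hs'])))
  have hL : ∀ k, LCount le k = (k + c - 1).choose c := by
    intro k
    rw [← weak_count, LCount]
    symm
    apply Nat.card_eq_of_bijective
      (fun g : {g : Fin c → Fin k // Monotone g} =>
        (⟨g.1 ∘ π, fun i j h => g.2 ((hπ i j).1 h)⟩ :
          {f : Fin n → Fin k // ∀ i j, le i j → f i ≤ f j}))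
    constructor
    · rintro ⟨g, hg⟩ ⟨g', hg'⟩ h
      apply Subtype.ext
      exact hs.injective_comp_right (Subtype.ext_iff.1 h)
    · rintro ⟨f, hf⟩
      obtain ⟨g, hg, rfl⟩ := hfac k f hf
      exact ⟨⟨g, hg⟩, rfl⟩
  have hLs : ∀ k, LstrCount le k = k.choose c := by
    intro k
    rw [← strict_count, LstrCount]
    symm
    apply Nat.card_eq_of_bijective
      (fun g : {g : Fin c → Fin k // StrictMono g} =>
        (⟨g.1 ∘ π, fun i j h => g.2.monotone ((hπ i j).1 h), fun i j _ h' =>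
          (hπ j i).2 (g.2.injective h').ge⟩ :
          {f : Fin n → Fin k // (∀ i j, le i j → f i ≤ f j) ∧
            (∀ i j, le i j → f i = f j → le j i)}))
    constructor
    · rintro ⟨g, hg⟩ ⟨g', hg'⟩ h
      apply Subtype.ext
      exact hs.injective_comp_right (Subtype.ext_iff.1 h)
    · rintro ⟨f, hf, hf'⟩
      obtain ⟨g, hg, rfl⟩ := hfac k f hf
      refine ⟨⟨g, hg.strictMono_of_injective ?_⟩, rfl⟩
      have key : ∀ i j, g (π i) = g (π j) → π i ≤ π j → π i = π j := fun i j h h' =>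
        le_antisymm h' ((hπ _ _).1 (hf' i j ((hπ _ _).2 h') h))
      intro x y hxy
      obtain ⟨i, rfl⟩ := hs x
      obtain ⟨j, rfl⟩ := hs y
      rcases le_total (π i) (π j) with h | h
      · exact key _ _ hxy h
      · exact (key _ _ hxy.symm h).symm
  have hf : (c.factorial : ℚ) ≠ 0 := by positivity
  refine ⟨C ((c.factorial : ℚ)⁻¹) * ascPochhammer ℚ c, fun k => ?_, fun k => ?_⟩
  · rw [eval_mul, eval_C, ascPochhammer_nat_eq_natCast_descFactorial, hL,
      Nat.descFactorial_eq_factorial_mul_choose]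
    push_cast
    field_simp
  · rw [eval_mul, eval_C, ascPochhammer_eval_neg_eq_descPochhammer,
      descPochhammer_eval_eq_descFactorial, hLs, ← hc,
      Nat.descFactorial_eq_factorial_mul_choose]
    push_cast
    field_simp

def le1 {n : ℕ} (le : Fin n → Fin n → Prop) (a b i j : Fin n) : Prop :=
  le i j ∨ (le i a ∧ le b j)

def le2 {n : ℕ} (le : Fin n → Fin n → Prop) (a b i j : Fin n) : Prop :=
  le i j ∨ (le i a ∧ le b j) ∨ (le i b ∧ le a j)

section
variable {n : ℕ} (le : Fin n → Fin n → Prop)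
    (hrefl : ∀ i, le i i) (htrans : ∀ i j k, le i j → le j k → le i k)
    (a b : Fin n) (hab : ¬ le a b) (hba : ¬ le b a)

theorem le1_trans (htrans : ∀ i j k, le i j → le j k → le i k) :
    ∀ i j k, le1 le a b i j → le1 le a b j k → le1 le a b i k := by
  unfold le1
  intro i j k h h'
  rcases h with h | h <;> rcases h' with h' | h'
  · exact .inl (htrans _ _ _ h h')
  · exact .inr ⟨htrans _ _ _ h h'.1, h'.2⟩
  · exact .inr ⟨h.1, htrans _ _ _ h.2 h'⟩
  · exact .inr ⟨h.1, h'.2⟩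

theorem le2_trans (htrans : ∀ i j k, le i j → le j k → le i k) :
    ∀ i j k, le2 le a b i j → le2 le a b j k → le2 le a b i k := by
  unfold le2
  intro i j k h h'
  rcases h with h | h | h <;> rcases h' with h' | h' | h'
  · exact .inl (htrans _ _ _ h h')
  · exact .inr (.inl ⟨htrans _ _ _ h h'.1, h'.2⟩)
  · exact .inr (.inr ⟨htrans _ _ _ h h'.1, h'.2⟩)
  · exact .inr (.inl ⟨h.1, htrans _ _ _ h.2 h'⟩)
  · exact .inr (.inl ⟨h.1, h'.2⟩)
  · exact .inl (htrans _ _ _ h.1 h'.2)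
  · exact .inr (.inr ⟨h.1, htrans _ _ _ h.2 h'⟩)
  · exact .inl (htrans _ _ _ h.1 h'.2)
  · exact .inr (.inr ⟨h.1, h'.2⟩)

theorem cl_le1 (htrans : ∀ i j k, le i j → le j k → le i k) (hba : ¬ le b a) :
    clQP (le1 le a b) = clQP le := by
  have : (fun i j : Fin n => le1 le a b i j ∧ le1 le a b j i) = fun i j => le i j ∧ le j i := by
    funext i j
    apply propext
    unfold le1
    constructor
    · rintro ⟨h | h, h' | h'⟩
      · exact ⟨h, h'⟩
      · exact (hba (htrans _ _ _ h'.2 (htrans _ _ _ h h'.1))).elim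
      · exact (hba (htrans _ _ _ h.2 (htrans _ _ _ h' h.1))).elim
      · exact (hba (htrans _ _ _ h.2 h'.1)).elim
    · exact fun h => ⟨.inl h.1, .inl h.2⟩
  unfold clQP
  rw [this]

theorem cl_le2 (hrefl : ∀ i, le i i) (htrans : ∀ i j k, le i j → le j k → le i k)
    (hab : ¬ le a b) (hba : ¬ le b a) :
    clQP le = clQP (le2 le a b) + 1 := by
  classical
  let r : Setoid (Fin n) := ⟨fun i j => le i j ∧ le j i,
    ⟨fun i => ⟨hrefl i, hrefl i⟩, fun h => ⟨h.2, h.1⟩,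
      fun h h' => ⟨htrans _ _ _ h.1 h'.1, htrans _ _ _ h'.2 h.2⟩⟩⟩
  have t2 := le2_trans le a b htrans
  let r2 : Setoid (Fin n) := ⟨fun i j => le2 le a b i j ∧ le2 le a b j i,
    ⟨fun i => ⟨.inl (hrefl i), .inl (hrefl i)⟩, fun h => ⟨h.2, h.1⟩,
      fun h h' => ⟨t2 _ _ _ h.1 h'.1, t2 _ _ _ h'.2 h.2⟩⟩⟩
  change Nat.card (Quotient r) = Nat.card (Quotient r2) + 1
  let F : Quotient r → Quotient r2 := Quotient.map' id (fun i j h => ⟨.inl h.1, .inl h.2⟩)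
  have hF : Function.Bijective (fun x : {x : Quotient r // x ≠ Quotient.mk r b} => F x.1) := by
    constructor
    · rintro ⟨x, hx⟩ ⟨y, hy⟩ h
      apply Subtype.ext
      revert hx hy h
      refine Quotient.inductionOn₂ x y ?_
      intro i j hx hy h
      have hx : ¬ (le i b ∧ le b i) := fun h => hx (Quotient.sound h)
      have hy : ¬ (le j b ∧ le b j) := fun h => hy (Quotient.sound h)
      have h : le2 le a b i j ∧ le2 le a b j i := Quotient.exact h
      apply Quotient.sound
      change le i j ∧ le j i
      unfold le2 at h
      obtain ⟨h | h | h, h' | h' | h'⟩ := h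
      · exact ⟨h, h'⟩
      · exact (hba (htrans _ _ _ h'.2 (htrans _ _ _ h h'.1))).elim
      · exact (hab (htrans _ _ _ h'.2 (htrans _ _ _ h h'.1))).elim
      · exact (hba (htrans _ _ _ h.2 (htrans _ _ _ h' h.1))).elim
      · exact (hba (htrans _ _ _ h.2 h'.1)).elim
      · exact (hy ⟨h'.1, h.2⟩).elim
      · exact (hab (htrans _ _ _ h.2 (htrans _ _ _ h' h.1))).elim
      · exact (hx ⟨h.1, h'.2⟩).elim
      · exact (hab (htrans _ _ _ h.2 h'.1)).elim
    · intro y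
      refine Quotient.inductionOn y ?_
      intro i
      by_cases hi : le i b ∧ le b i
      · refine ⟨⟨Quotient.mk r a, fun h => hab (Quotient.exact h).1⟩, ?_⟩
        exact Quotient.sound ⟨.inr (.inl ⟨hrefl a, hi.2⟩), .inr (.inr ⟨hi.1, hrefl a⟩)⟩
      · exact ⟨⟨Quotient.mk r i, fun h => hi (Quotient.exact h)⟩, rfl⟩
  rw [← Nat.card_eq_of_bijective _ hF, Nat.card_eq_fintype_card, Nat.card_eq_fintype_card,
    Fintype.card_subtype_compl, Fintype.card_subtype_eq]
  have : 0 < Fintype.card (Quotient r) := Fintype.card_pos_iff.2 ⟨Quotient.mk r b⟩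
  omega

open Finset in
theorem L_rec (hrefl : ∀ i, le i i) (htrans : ∀ i j k, le i j → le j k → le i k) (k : ℕ) :
    LCount (le1 le a b) k + LCount (le1 le b a) k = LCount le k + LCount (le2 le a b) k := by
  classical
  unfold LCount
  simp only [Nat.card_eq_fintype_card, Fintype.card_subtype]
  rw [← card_union_add_card_inter]
  have h1 : ∀ (a b : Fin n) (f : Fin n → Fin k), (∀ i j, le1 le a b i j → f i ≤ f j) ↔
      (∀ i j, le i j → f i ≤ f j) ∧ f a ≤ f b := by
    intro a b f
    constructor
    · intro h
      exact ⟨fun i j hij => h i j (.inl hij), h a b (.inr ⟨hrefl a, hrefl b⟩)⟩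
    · rintro ⟨h, h'⟩ i j (hij | hij)
      · exact h i j hij
      · exact (h _ _ hij.1).trans (h'.trans (h _ _ hij.2))
  have h2 : ∀ (f : Fin n → Fin k), (∀ i j, le2 le a b i j → f i ≤ f j) ↔
      (∀ i j, le i j → f i ≤ f j) ∧ f a ≤ f b ∧ f b ≤ f a := by
    intro f
    constructor
    · intro h
      exact ⟨fun i j hij => h i j (.inl hij), h a b (.inr (.inl ⟨hrefl a, hrefl b⟩)),
        h b a (.inr (.inr ⟨hrefl b, hrefl a⟩))⟩
    · rintro ⟨h, h', h''⟩ i j (hij | hij | hij)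
      · exact h i j hij
      · exact (h _ _ hij.1).trans (h'.trans (h _ _ hij.2))
      · exact (h _ _ hij.1).trans (h''.trans (h _ _ hij.2))
  congr 2
  · ext f
    simp only [mem_union, mem_filter, mem_univ, true_and, h1]
    have := le_total (f a) (f b)
    tauto
  · ext f
    simp only [mem_inter, mem_filter, mem_univ, true_and, h1, h2]
    tauto

open Finset in
theorem Lstr_rec (hrefl : ∀ i, le i i) (htrans : ∀ i j k, le i j → le j k → le i k)
    (hab : ¬ le a b) (hba : ¬ le b a) (k : ℕ) :
    LstrCount le k = LstrCount (le1 le a b) k + LstrCount (le1 le b a) k +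
      LstrCount (le2 le a b) k := by
  classical
  unfold LstrCount
  simp only [Nat.card_eq_fintype_card, Fintype.card_subtype]
  have h1 : ∀ (a b : Fin n) (f : Fin n → Fin k), ¬ le b a → 
      (((∀ i j, le1 le a b i j → f i ≤ f j) ∧
        (∀ i j, le1 le a b i j → f i = f j → le1 le a b j i)) ↔
      ((∀ i j, le i j → f i ≤ f j) ∧ (∀ i j, le i j → f i = f j → le j i)) ∧ f a < f b) := by
    intro a b f hba
    constructor
    · rintro ⟨h, h'⟩
      have hlab : le1 le a b a b := .inr ⟨hrefl a, hrefl b⟩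
      refine ⟨⟨fun i j hij => h i j (.inl hij), fun i j hij e => ?_⟩,
        lt_of_le_of_ne (h a b hlab) fun e => ?_⟩
      · rcases h' i j (.inl hij) e with h3 | h3
        · exact h3
        · exact (hba (htrans _ _ _ h3.2 (htrans _ _ _ hij h3.1))).elim
      · rcases h' a b hlab e with h3 | h3
        · exact hba h3
        · exact hba h3.1
    · rintro ⟨⟨h, h'⟩, hlt⟩
      have key : ∀ i j, le i a ∧ le b j → f i < f j := fun i j hij =>
        (h _ _ hij.1).trans_lt (hlt.trans_le (h _ _ hij.2))
      refine ⟨?_, ?_⟩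
      · rintro i j (hij | hij)
        · exact h i j hij
        · exact (key i j hij).le
      · rintro i j (hij | hij) e
        · exact .inl (h' i j hij e)
        · exact ((key i j hij).ne e).elim
  have h2 : ∀ (f : Fin n → Fin k),
      (((∀ i j, le2 le a b i j → f i ≤ f j) ∧
        (∀ i j, le2 le a b i j → f i = f j → le2 le a b j i)) ↔
      ((∀ i j, le i j → f i ≤ f j) ∧ (∀ i j, le i j → f i = f j → le j i)) ∧ f a = f b) := by
    intro f
    constructor
    · rintro ⟨h, h'⟩
      refine ⟨⟨fun i j hij => h i j (.inl hij), fun i j hij e => ?_⟩,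
        le_antisymm (h a b (.inr (.inl ⟨hrefl a, hrefl b⟩)))
        (h b a (.inr (.inr ⟨hrefl b, hrefl a⟩)))⟩
      rcases h' i j (.inl hij) e with h3 | h3 | h3
      · exact h3
      · exact (hba (htrans _ _ _ h3.2 (htrans _ _ _ hij h3.1))).elim
      · exact (hab (htrans _ _ _ h3.2 (htrans _ _ _ hij h3.1))).elim
    · rintro ⟨⟨h, h'⟩, he⟩
      refine ⟨?_, ?_⟩
      · rintro i j (hij | hij | hij)
        · exact h i j hij
        · exact (h _ _ hij.1).trans (he.le.trans (h _ _ hij.2))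
        · exact (h _ _ hij.1).trans (he.ge.trans (h _ _ hij.2))
      · rintro i j (hij | hij | hij) e
        · exact .inl (h' i j hij e)
        · have e1 := h _ _ hij.1
          have e2 := h _ _ hij.2
          exact .inr (.inr ⟨h' _ _ hij.2 (by omega), h' _ _ hij.1 (by omega)⟩)
        · have e1 := h _ _ hij.1
          have e2 := h _ _ hij.2
          exact .inr (.inl ⟨h' _ _ hij.2 (by omega), h' _ _ hij.1 (by omega)⟩)
  simp only [h1 a b _ hba, h1 b a _ hab, h2]
  rw [← card_union_of_disjoint, ← card_union_of_disjoint]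
  · congr 1
    ext f
    simp only [mem_union, mem_filter, mem_univ, true_and]
    have := lt_trichotomy (f a) (f b)
    tauto
  · rw [disjoint_left]
    intro f
    simp only [mem_union, mem_filter, mem_univ, true_and]
    rintro (h | h) h'
    · exact h.2.ne h'.2
    · exact h.2.ne' h'.2
  · rw [disjoint_left]
    intro f
    simp only [mem_filter, mem_univ, true_and]
    intro h h'
    exact lt_asymm h.2 h'.2

end

open Classical in
noncomputable def defect {n : ℕ} (le : Fin n → Fin n → Prop) : ℕ :=
  (Finset.univ.filter fun x : Fin n × Fin n => ¬ le x.1 x.2).card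

theorem defect_lt {n : ℕ} (le le' : Fin n → Fin n → Prop) (h : ∀ i j, le i j → le' i j)
    (a b : Fin n) (hab : ¬ le a b) (hab' : le' a b) : defect le' < defect le := by
  classical
  unfold defect
  apply Finset.card_lt_card
  rw [Finset.ssubset_iff_of_subset]
  · exact ⟨(a, b), by simpa using hab, by simpa using hab'⟩
  · intro x hx
    simp only [Finset.mem_filter, Finset.mem_univ, true_and] at hx ⊢
    exact fun h' => hx (h _ _ h')

theorem good_all {n : ℕ} : ∀ (d : ℕ) (le : Fin n → Fin n → Prop)
    (_ : ∀ i, le i i) (_ : ∀ i j k, le i j → le j k → le i k), defect le = d → Good le := by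
  intro d
  induction d using Nat.strong_induction_on with
  | _ d ih =>
    intro le hrefl htrans hd
    by_cases htot : ∀ i j, le i j ∨ le j i
    · exact good_total le hrefl htrans htot
    push Not at htot
    obtain ⟨a, b, hab, hba⟩ := htot
    subst hd
    obtain ⟨p1, h1, h1'⟩ := ih _ (defect_lt le (le1 le a b) (fun _ _ h => .inl h) a b hab
      (.inr ⟨hrefl a, hrefl b⟩)) _ (fun i => .inl (hrefl i)) (le1_trans le a b htrans) rfl
    obtain ⟨p2, h2, h2'⟩ := ih _ (defect_lt le (le1 le b a) (fun _ _ h => .inl h) b a hba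
      (.inr ⟨hrefl b, hrefl a⟩)) _ (fun i => .inl (hrefl i)) (le1_trans le b a htrans) rfl
    obtain ⟨p3, h3, h3'⟩ := ih _ (defect_lt le (le2 le a b) (fun _ _ h => .inl h) a b hab
      (.inr (.inl ⟨hrefl a, hrefl b⟩))) _ (fun i => .inl (hrefl i)) (le2_trans le a b htrans) rfl
    refine ⟨p1 + p2 - p3, fun k => ?_, fun k => ?_⟩
    · rw [eval_sub, eval_add, h1, h2, h3]
      have := L_rec le a b hrefl htrans k
      have : ((LCount (le1 le a b) k + LCount (le1 le b a) k : ℕ) : ℚ) =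
        (LCount le k + LCount (le2 le a b) k : ℕ) := by rw [this]
      push_cast at this
      linarith
    · rw [eval_sub, eval_add, h1', h2', h3', Lstr_rec le a b hrefl htrans hab hba k,
        cl_le1 le a b htrans hba, cl_le1 le b a htrans hab,
        cl_le2 le a b hrefl htrans hab hba]
      push_cast
      ring

end DualAux

/-- Duality principle: `ehr^str_P(X) = (-1)^{cl(P)} · ehr_P(-X)`. -/
theorem duality_principle {n : ℕ} (le : Fin n → Fin n → Prop)
    (hrefl : ∀ i, le i i)
    (htrans : ∀ i j k, le i j → le j k → le i k)
    (p q : ℚ[X])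
    (hp : ∀ k : ℕ, p.eval (k : ℚ) = LCount le k)
    (hq : ∀ k : ℕ, q.eval (k : ℚ) = LstrCount le k) :
    q = Polynomial.C ((-1 : ℚ) ^ clQP le) * p.comp (-Polynomial.X) := by
  obtain ⟨p', h1, h2⟩ := DualAux.good_all _ le hrefl htrans rfl
  have hinf : (Set.range fun k : ℕ => (k : ℚ)).Infinite :=
    Set.infinite_range_of_injective Nat.cast_injective
  have hpp : p = p' := by
    apply eq_of_infinite_eval_eq
    refine hinf.mono ?_
    rintro _ ⟨k, rfl⟩
    simp [hp, h1]
  subst hpp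
  apply eq_of_infinite_eval_eq
  refine hinf.mono ?_
  rintro _ ⟨k, rfl⟩
  simp only [Set.mem_ofPred_eq, eval_mul, eval_C, eval_comp, eval_neg, eval_X, hq, h2]
  rw [← mul_assoc, ← mul_pow]
  simp
end

section
/- Let ≤_P be a partial order on Fin n. Then μ_P · P! ≥ n!, where μ_P is the number of bijections f : Fin n → Fin n such that i ≤_P j implies f(i) ≤ f(j), and P! = Π_{i ∈ Fin n} #{j ∈ Fin n : i ≤_P j}. Moreover equality holds if and only if P is a rooted forest, i.e. for all a, b, c ∈ Fin n, a ≤_P c and b ≤_P c imply (a ≤_P b or b ≤_P a). -/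
/-- `μ_P`: the number of heap-orderings of the poset `le`, i.e. bijections
`f : Fin n → Fin n` such that `i ≤_P j` implies `f i ≤ f j`. -/
noncomputable def heapOrderings {n : ℕ} (le : Fin n → Fin n → Prop) : ℕ :=
  Nat.card {f : Fin n → Fin n //
    Function.Bijective f ∧ ∀ i j, le i j → f i ≤ f j}

/-- `P!`: the factorial of the poset `le`. -/
noncomputable def posetFactorial {n : ℕ} (le : Fin n → Fin n → Prop) : ℕ :=
  ∏ i : Fin n, Nat.card {j : Fin n // le i j}

open Classical in
noncomputable def hoMin {α : Type} (le : α → α → Prop) (S : Finset α) : Finset α :=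
  S.filter (fun m => ∀ x ∈ S, le x m → x = m)

open Classical in
noncomputable def hoExt {α : Type} (le : α → α → Prop) : ℕ → Finset α → Finset (List α)
  | 0, _ => {[]}
  | k+1, S => (hoMin le S).biUnion (fun m => (hoExt le k (S.erase m)).image (List.cons m))

open Classical in
theorem hoExt_mem {α : Type} (le : α → α → Prop) (hrefl : ∀ i, le i i) (k : ℕ) :
    ∀ (S : Finset α), S.card = k → ∀ l : List α, l ∈ hoExt le k S ↔
      (∀ x, x ∈ l ↔ x ∈ S) ∧ l.Pairwise (fun x y => ¬ le y x) := by
  induction k with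
  | zero =>
    intro S hS l
    rw [Finset.card_eq_zero] at hS
    subst hS
    simp only [hoExt, Finset.mem_singleton]
    constructor
    · rintro rfl; simp
    · rintro ⟨h, -⟩
      exact List.eq_nil_iff_forall_not_mem.2 (fun x hx => by simpa using (h x).1 hx)
  | succ k ih =>
    intro S hS l
    simp only [hoExt, Finset.mem_biUnion, Finset.mem_image]
    constructor
    · rintro ⟨m, hm, l', hl', rfl⟩
      simp only [hoMin, Finset.mem_filter] at hm
      rw [ih _ (by rw [Finset.card_erase_of_mem hm.1, hS]; rfl)] at hl'
      refine ⟨fun x => ?_, ?_⟩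
      · rw [List.mem_cons, hl'.1, Finset.mem_erase]
        constructor
        · rintro (rfl | h)
          exacts [hm.1, h.2]
        · intro h
          by_cases hx : x = m
          exacts [Or.inl hx, Or.inr ⟨hx, h⟩]
      · refine List.pairwise_cons.2 ⟨fun x hx hle => ?_, hl'.2⟩
        have := Finset.mem_erase.1 ((hl'.1 x).1 hx)
        exact this.1 (hm.2 x this.2 hle)
    · rintro ⟨h1, h2⟩
      cases l with
      | nil =>
        have : S = ∅ := Finset.eq_empty_of_forall_notMem (fun x hx => by simpa using (h1 x).2 hx)
        simp [this] at hS
      | cons m l =>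
        have hm : m ∈ S := (h1 m).1 (by simp)
        rw [List.pairwise_cons] at h2
        have hml : m ∉ l := fun h => h2.1 m h (hrefl m)
        refine ⟨m, ?_, l, ?_, rfl⟩
        · simp only [hoMin, Finset.mem_filter]
          refine ⟨hm, fun x hx hle => ?_⟩
          rcases List.mem_cons.1 ((h1 x).2 hx) with h | h
          · exact h
          · exact absurd hle (h2.1 x h)
        · rw [ih _ (by rw [Finset.card_erase_of_mem hm, hS]; rfl)]
          refine ⟨fun x => ?_, h2.2⟩
          rw [Finset.mem_erase, ← h1, List.mem_cons]
          constructor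
          · intro h
            exact ⟨fun e => hml (e ▸ h), Or.inr h⟩
          · rintro ⟨h, h' | h'⟩
            exacts [absurd h' h, h']

open Classical in
theorem hoExt_card {α : Type} (le : α → α → Prop) (k : ℕ) (S : Finset α) :
    (hoExt le (k+1) S).card = ∑ m ∈ hoMin le S, (hoExt le k (S.erase m)).card := by
  rw [hoExt, Finset.card_biUnion]
  · refine Finset.sum_congr rfl fun m _ => ?_
    exact Finset.card_image_of_injective _ (List.cons_injective)
  · intro a _ b _ hab
    rw [Function.onFun, Finset.disjoint_left]
    intro l h1 h2
    obtain ⟨l1, _, rfl⟩ := Finset.mem_image.1 h1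
    obtain ⟨l2, _, h⟩ := Finset.mem_image.1 h2
    exact hab (List.cons.inj h).1.symm

open Classical in
noncomputable def hoFact {α : Type} (le : α → α → Prop) (S : Finset α) : ℕ :=
  ∏ i ∈ S, (S.filter (le i)).card

open Classical in
theorem hoFact_erase {α : Type} (le : α → α → Prop) (S : Finset α) (m : α)
    (hm : m ∈ hoMin le S) :
    hoFact le S = (S.filter (le m)).card * hoFact le (S.erase m) := by
  simp only [hoMin, Finset.mem_filter] at hm
  rw [hoFact, ← Finset.mul_prod_erase S _ hm.1, hoFact]
  congr 1
  refine Finset.prod_congr rfl fun i hi => ?_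
  rw [Finset.mem_erase] at hi
  congr 1
  ext x
  simp only [Finset.mem_filter, Finset.mem_erase]
  constructor
  · rintro ⟨h1, h2⟩
    refine ⟨⟨?_, h1⟩, h2⟩
    rintro rfl
    exact hi.1 (hm.2 i hi.2 h2)
  · rintro ⟨⟨_, h1⟩, h2⟩
    exact ⟨h1, h2⟩

open Classical in
theorem hoMin_exists {α : Type} (le : α → α → Prop) (hrefl : ∀ i, le i i)
    (htrans : ∀ i j k, le i j → le j k → le i k)
    (hantisymm : ∀ i j, le i j → le j i → i = j) (S : Finset α) (x : α) (hx : x ∈ S) :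
    ∃ m ∈ hoMin le S, le m x := by
  let _ : PartialOrder α :=
    { le := le, le_refl := hrefl, le_trans := htrans, le_antisymm := hantisymm }
  obtain ⟨m, hmx, hm⟩ := S.exists_le_minimal hx
  refine ⟨m, ?_, hmx⟩
  simp only [hoMin, Finset.mem_filter]
  exact ⟨hm.prop, fun y hy hle => hantisymm _ _ hle (hm.le_of_le hy hle)⟩

open Classical in
theorem hoExt_main {α : Type} (le : α → α → Prop) (hrefl : ∀ i, le i i)
    (htrans : ∀ i j k, le i j → le j k → le i k)
    (hantisymm : ∀ i j, le i j → le j i → i = j) (k : ℕ) :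
    ∀ S : Finset α, S.card = k →
      k.factorial ≤ (hoExt le k S).card * hoFact le S ∧
      ((hoExt le k S).card * hoFact le S = k.factorial ↔
        ∀ a ∈ S, ∀ b ∈ S, ∀ c ∈ S, le a c → le b c → (le a b ∨ le b a)) := by
  induction k with
  | zero =>
    intro S hS
    rw [Finset.card_eq_zero] at hS
    subst hS
    simp [hoExt, hoFact]
  | succ k ih =>
    intro S hS
    have hminS : ∀ m ∈ hoMin le S, m ∈ S ∧ ∀ x ∈ S, le x m → x = m := by
      intro m hm
      simpa only [hoMin, Finset.mem_filter] using hm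
    have hc : ∀ m ∈ hoMin le S, (S.erase m).card = k := by
      intro m hm
      rw [Finset.card_erase_of_mem (hminS m hm).1, hS]; rfl
    have key : (hoExt le (k+1) S).card * hoFact le S =
        ∑ m ∈ hoMin le S, (S.filter (le m)).card *
          ((hoExt le k (S.erase m)).card * hoFact le (S.erase m)) := by
      rw [hoExt_card, Finset.sum_mul]
      refine Finset.sum_congr rfl fun m hm => ?_
      rw [hoFact_erase le S m hm]; ring
    have hcov : (hoMin le S).biUnion (fun m => S.filter (le m)) = S := by
      ext x
      simp only [Finset.mem_biUnion, Finset.mem_filter]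
      constructor
      · rintro ⟨_, _, h, _⟩; exact h
      · intro hx
        obtain ⟨m, hm, hle⟩ := hoMin_exists le hrefl htrans hantisymm S x hx
        exact ⟨m, hm, hx, hle⟩
    have hsum : k + 1 ≤ ∑ m ∈ hoMin le S, (S.filter (le m)).card := by
      rw [← hS]
      conv_lhs => rw [← hcov]
      exact Finset.card_biUnion_le
    have hterm : ∀ m ∈ hoMin le S, (S.filter (le m)).card * k.factorial ≤
        (S.filter (le m)).card *
          ((hoExt le k (S.erase m)).card * hoFact le (S.erase m)) := fun m hm =>
      Nat.mul_le_mul_left _ (ih _ (hc m hm)).1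
    have h1 : (k+1).factorial ≤ (∑ m ∈ hoMin le S, (S.filter (le m)).card) * k.factorial := by
      rw [Nat.factorial_succ]; exact Nat.mul_le_mul_right _ hsum
    have h2 : (∑ m ∈ hoMin le S, (S.filter (le m)).card) * k.factorial ≤
        (hoExt le (k+1) S).card * hoFact le S := by
      rw [key, Finset.sum_mul]; exact Finset.sum_le_sum hterm
    refine ⟨h1.trans h2, ?_, ?_⟩
    · intro heq
      have e1 : ∑ m ∈ hoMin le S, (S.filter (le m)).card = k + 1 := by
        have : (∑ m ∈ hoMin le S, (S.filter (le m)).card) * k.factorial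
          = (k+1) * k.factorial := by
          rw [← Nat.factorial_succ]; omega
        exact Nat.eq_of_mul_eq_mul_right (Nat.factorial_pos k) this
      have e2 : ∀ m ∈ hoMin le S, (S.filter (le m)).card * k.factorial =
        (S.filter (le m)).card *
          ((hoExt le k (S.erase m)).card * hoFact le (S.erase m)) := by
        rw [← Finset.sum_eq_sum_iff_of_le hterm, ← key, ← Finset.sum_mul]
        omega
      have e3 : ∀ m ∈ hoMin le S, ∀ a ∈ S.erase m, ∀ b ∈ S.erase m, ∀ c ∈ S.erase m,
          le a c → le b c → (le a b ∨ le b a) := by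
        intro m hm
        refine (ih _ (hc m hm)).2.1 ?_
        refine (Nat.eq_of_mul_eq_mul_left ?_ (e2 m hm)).symm
        exact Finset.card_pos.2 ⟨m, Finset.mem_filter.2 ⟨(hminS m hm).1, hrefl m⟩⟩
      have key2 : ∀ a ∈ S, ∀ b ∈ S, ∀ c ∈ S, le a c → le b c → ¬ le a b → ¬ le b a →
          a ∈ hoMin le S := by
        intro a ha b hb c hcS hac hbc hab hba
        obtain ⟨m, hm, hma⟩ := hoMin_exists le hrefl htrans hantisymm S a ha
        by_cases ham : a = m
        · rw [ham]; exact hm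
        · exfalso
          have hbm : b ≠ m := by rintro rfl; exact hba hma
          have hcm : c ≠ m := by
            rintro rfl; exact ham (hantisymm _ _ hac hma)
          rcases e3 m hm a (Finset.mem_erase.2 ⟨ham, ha⟩) b (Finset.mem_erase.2 ⟨hbm, hb⟩) c
            (Finset.mem_erase.2 ⟨hcm, hcS⟩) hac hbc with h | h
          exacts [hab h, hba h]
      intro a ha b hb c hcS hac hbc
      by_contra hcon
      push Not at hcon
      have hma := key2 a ha b hb c hcS hac hbc hcon.1 hcon.2
      have hmb := key2 b hb a ha c hcS hbc hac hcon.2 hcon.1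
      have hab : b ≠ a := by rintro rfl; exact hcon.1 (hrefl _)
      have hlt : S.card < ∑ m ∈ hoMin le S, (S.filter (le m)).card := by
        rw [← Finset.add_sum_erase _ _ hma]
        have hsub : S ⊆ S.filter (le a) ∪
            (((hoMin le S).erase a).biUnion (fun m => S.filter (le m))) := by
          intro x hx
          rw [← hcov] at hx
          obtain ⟨m, hm, hx⟩ := Finset.mem_biUnion.1 hx
          by_cases h : m = a
          · subst h; exact Finset.mem_union_left _ hx
          · exact Finset.mem_union_right _
              (Finset.mem_biUnion.2 ⟨m, Finset.mem_erase.2 ⟨h, hm⟩, hx⟩)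
        have hint : 0 < (S.filter (le a) ∩
            (((hoMin le S).erase a).biUnion (fun m => S.filter (le m)))).card := by
          refine Finset.card_pos.2 ⟨c, Finset.mem_inter.2
            ⟨Finset.mem_filter.2 ⟨hcS, hac⟩, Finset.mem_biUnion.2
              ⟨b, Finset.mem_erase.2 ⟨hab, hmb⟩, Finset.mem_filter.2 ⟨hcS, hbc⟩⟩⟩⟩
        have t1 := Finset.card_le_card hsub
        have t2 := Finset.card_union_add_card_inter (S.filter (le a))
            (((hoMin le S).erase a).biUnion (fun m => S.filter (le m)))
        have t3 := Finset.card_biUnion_le (s := (hoMin le S).erase a)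
          (t := fun m => S.filter (le m))
        omega
      omega
    · intro hf
      have e1 : ∑ m ∈ hoMin le S, (S.filter (le m)).card = k + 1 := by
        rw [← hS]
        conv_rhs => rw [← hcov]
        symm
        apply Finset.card_biUnion
        intro a ha b hb hab
        rw [Function.onFun, Finset.disjoint_left]
        intro x hx hx'
        rw [Finset.mem_filter] at hx hx'
        have ha' := hminS a ha
        have hb' := hminS b hb
        rcases hf a ha'.1 b hb'.1 x hx.1 hx.2 hx'.2 with h | h
        · exact hab (hb'.2 a ha'.1 h)
        · exact hab (ha'.2 b hb'.1 h).symm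
      rw [key, Nat.factorial_succ, ← e1, Finset.sum_mul]
      refine Finset.sum_congr rfl fun m hm => ?_
      congr 1
      refine (ih _ (hc m hm)).2.2 ?_
      intro a ha b hb c hc
      exact hf a (Finset.mem_of_mem_erase ha) b (Finset.mem_of_mem_erase hb) c
        (Finset.mem_of_mem_erase hc)

open Classical in
theorem heapOrderings_eq {n : ℕ} (le : Fin n → Fin n → Prop) (hrefl : ∀ i, le i i) :
    heapOrderings le = (hoExt le n Finset.univ).card := by
  have hmem := hoExt_mem le hrefl n Finset.univ (by simp)
  have hF : ∀ f : {f : Fin n → Fin n // Function.Bijective f ∧ ∀ i j, le i j → f i ≤ f j},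
      List.ofFn (Equiv.ofBijective f.1 f.2.1).symm ∈ hoExt le n Finset.univ := by
    intro f
    rw [hmem]
    refine ⟨fun x => ?_, ?_⟩
    · simp only [List.mem_ofFn', Set.mem_range, Finset.mem_univ, iff_true]
      exact (Equiv.ofBijective f.1 f.2.1).symm.surjective x
    · rw [List.pairwise_ofFn]
      intro i j hij hle
      have h := f.2.2 _ _ hle
      rw [Equiv.ofBijective_apply_symm_apply f.1, Equiv.ofBijective_apply_symm_apply f.1] at h
      exact absurd hij (not_lt.2 h)
  rw [heapOrderings, ← Nat.card_eq_finsetCard]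
  refine Nat.card_eq_of_bijective (fun f => ⟨_, hF f⟩) ⟨?_, ?_⟩
  · intro f g hfg
    have h := List.ofFn_injective (Subtype.mk.inj hfg)
    have h2 : (Equiv.ofBijective f.1 f.2.1).symm = (Equiv.ofBijective g.1 g.2.1).symm :=
      DFunLike.coe_injective h
    have h3 := congrArg Equiv.symm h2
    rw [Equiv.symm_symm, Equiv.symm_symm] at h3
    apply Subtype.ext
    funext x
    exact congrArg (fun e : Fin n ≃ Fin n => e x) h3
  · rintro ⟨l, hl⟩
    have hl' := (hmem l).1 hl
    have hnd : l.Nodup := List.Pairwise.imp (fun {a b} h (e : a = b) => h (e ▸ hrefl a)) hl'.2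
    have hlen : l.length = n := by
      have h1 : l.toFinset = Finset.univ := by
        ext x; simp [hl'.1 x]
      have h2 := List.toFinset_card_of_nodup hnd
      rw [h1] at h2
      simpa using h2.symm
    obtain ⟨g, rfl⟩ : ∃ g : Fin n → Fin n, l = List.ofFn g := by
      refine ⟨fun i => l.get (i.cast hlen.symm), ?_⟩
      apply List.ext_get
      · simp [hlen]
      · intro i h1 h2
        simp
    have hg : Function.Bijective g := by
      rw [← Finite.injective_iff_bijective]
      exact List.nodup_ofFn.1 hnd
    let e := Equiv.ofBijective g hg
    have hpw := List.pairwise_ofFn.1 hl'.2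
    refine ⟨⟨e.symm, e.symm.bijective, fun i j hij => ?_⟩, ?_⟩
    · by_contra hlt
      have h := hpw (not_le.1 hlt)
      apply h
      have hi : g (e.symm i) = i := e.apply_symm_apply i
      have hj : g (e.symm j) = j := e.apply_symm_apply j
      rw [hi, hj]
      exact hij
    · apply Subtype.ext
      show List.ofFn _ = List.ofFn g
      congr 1
      funext x
      rw [Equiv.symm_apply_eq]
      exact (e.symm_apply_apply x).symm

/-- `μ_P · P! ≥ n!`, with equality if and only if `P` is a rooted forest. -/
theorem mu_mul_factorial_ge {n : ℕ} (le : Fin n → Fin n → Prop)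
    (hrefl : ∀ i, le i i)
    (htrans : ∀ i j k, le i j → le j k → le i k)
    (hantisymm : ∀ i j, le i j → le j i → i = j) :
    n.factorial ≤ heapOrderings le * posetFactorial le ∧
    (heapOrderings le * posetFactorial le = n.factorial ↔
      ∀ a b c, le a c → le b c → (le a b ∨ le b a)) := by
  classical
  have h := hoExt_main le hrefl htrans hantisymm n Finset.univ (by simp)
  have hp : posetFactorial le = hoFact le Finset.univ := by
    rw [posetFactorial, hoFact]
    refine Finset.prod_congr rfl fun i _ => ?_
    rw [Nat.card_eq_fintype_card, Fintype.card_subtype]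
  rw [heapOrderings_eq le hrefl, hp]
  simpa using h
end

section
/- Non-commutative duality principle (combinatorial form): Let P be a quasi-poset on [n] and let u : Fin n → Fin m be any surjection (a packed word of length n). Then, as an identity of integers, (1 if u ∈ W_P, else 0) = (-1)^{cl(P)} · Σ_{w ∈ W^str_P, w admitting a non-decreasing surjection σ : Fin(max(w)) → Fin m with u = σ ∘ w} (-1)^{max(w)}. -/
open Classical in
/-- strict surjections from `S` onto `{1..k}`, extended by `0` off `S`. -/
noncomputable def strictE {α : Type*} [Fintype α] [PartialOrder α] (S : Finset α) (k : ℕ) :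
    Finset (α → ℕ) :=
  (Fintype.piFinset (fun _ : α => Finset.range (k + 1))).filter (fun f =>
    (∀ x, x ∉ S → f x = 0) ∧ (∀ x, x ∈ S → 1 ≤ f x) ∧
    (∀ j, 1 ≤ j → j ≤ k → ∃ x ∈ S, f x = j) ∧
    (∀ x ∈ S, ∀ y ∈ S, x < y → f x < f y))

theorem mem_strictE {α : Type*} [Fintype α] [PartialOrder α] (S : Finset α) (k : ℕ) (f : α → ℕ) :
    f ∈ strictE S k ↔ (∀ x, f x ≤ k) ∧ (∀ x, x ∉ S → f x = 0) ∧ (∀ x, x ∈ S → 1 ≤ f x) ∧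
    (∀ j, 1 ≤ j → j ≤ k → ∃ x ∈ S, f x = j) ∧
    (∀ x ∈ S, ∀ y ∈ S, x < y → f x < f y) := by
  simp [strictE]

open Classical in
/-- Maximal elements of `S`. -/
noncomputable def maxE {α : Type*} [PartialOrder α] (S : Finset α) : Finset α :=
  S.filter (fun x => ∀ y ∈ S, ¬ x < y)

theorem mem_maxE {α : Type*} [PartialOrder α] (S : Finset α) (x : α) :
    x ∈ maxE S ↔ x ∈ S ∧ ∀ y ∈ S, ¬ x < y := by
  simp [maxE]

open Classical in
theorem strictE_succ {α : Type*} [Fintype α] [PartialOrder α] (S : Finset α) (k : ℕ) :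
    (strictE S (k + 1)).card = ∑ A ∈ (maxE S).powerset.erase ∅, (strictE (S \ A) k).card := by
  rw [Finset.card_eq_sum_card_fiberwise (f := fun f => S.filter (fun x => f x = k + 1))
    (t := (maxE S).powerset.erase ∅)]
  · apply Finset.sum_congr rfl
    intro A hA
    rw [Finset.mem_erase, Finset.mem_powerset] at hA
    obtain ⟨hA0, hA⟩ := hA
    have hAS : ∀ x ∈ A, x ∈ S := fun x hx => ((mem_maxE _ _).1 (hA hx)).1
    have hAm : ∀ x ∈ A, ∀ y ∈ S, ¬ x < y := fun x hx => ((mem_maxE _ _).1 (hA hx)).2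
    obtain ⟨a, ha⟩ := Finset.nonempty_iff_ne_empty.2 hA0
    apply Finset.card_bij' (fun f _ => fun x => if x ∈ A then 0 else f x)
      (fun g _ => fun x => if x ∈ A then k + 1 else g x)
    · intro f hf
      rw [Finset.mem_filter, mem_strictE] at hf
      obtain ⟨⟨h1, h2, h3, h4, h5⟩, h6⟩ := hf
      have h6 : ∀ x, x ∈ A ↔ x ∈ S ∧ f x = k + 1 := by
        intro x; rw [← h6, Finset.mem_filter]
      rw [mem_strictE]
      simp only [Finset.mem_sdiff]
      refine ⟨?_, ?_, ?_, ?_, ?_⟩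
      · intro x; have := h1 x; have := h6 x; have := h2 x; grind
      · intro x; have := h2 x; grind
      · intro x; have := h3 x; grind
      · intro j hj hk
        obtain ⟨x, hx, hxj⟩ := h4 j hj (by omega)
        have := h6 x
        exact ⟨x, by grind⟩
      · intro x hx y hy hxy
        have := h5 x hx.1 y hy.1 hxy
        grind
    · intro g hg
      rw [mem_strictE] at hg
      obtain ⟨h1, h2, h3, h4, h5⟩ := hg
      simp only [Finset.mem_sdiff] at h2 h3 h4 h5
      rw [Finset.mem_filter, mem_strictE]
      refine ⟨⟨?_, ?_, ?_, ?_, ?_⟩, ?_⟩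
      · intro x; have := h1 x; grind
      · intro x; have := h2 x; have := hAS x; grind
      · intro x; have := h3 x; grind
      · intro j hj hk
        by_cases hjk : j = k + 1
        · exact ⟨a, hAS a ha, by simp [ha, hjk]⟩
        · obtain ⟨x, hx, hxj⟩ := h4 j hj (by omega)
          exact ⟨x, hx.1, by grind⟩
      · intro x hx y hy hxy
        have := h5 x
        have := hAm x
        have := h1 x
        grind
      · ext x
        have := h1 x
        have := hAS x
        rw [Finset.mem_filter]
        grind
    · intro f hf
      rw [Finset.mem_filter] at hf
      funext x
      have h6 : x ∈ A ↔ x ∈ S ∧ f x = k + 1 := by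
        rw [← hf.2, Finset.mem_filter]
      grind
    · intro g hg
      rw [mem_strictE] at hg
      funext x
      have := hg.2.1 x
      simp only [Finset.mem_sdiff] at this
      grind
  · intro f hf
    rw [Finset.mem_coe, mem_strictE] at hf
    obtain ⟨h1, h2, h3, h4, h5⟩ := hf
    rw [Finset.mem_coe, Finset.mem_erase, Finset.mem_powerset]
    constructor
    · obtain ⟨x, hx, hxk⟩ := h4 (k + 1) (by omega) le_rfl
      exact Finset.nonempty_iff_ne_empty.1 ⟨x, Finset.mem_filter.2 ⟨hx, hxk⟩⟩
    · intro x hx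
      rw [Finset.mem_filter] at hx
      refine (mem_maxE _ _).2 ⟨hx.1, fun y hy hxy => ?_⟩
      have := h5 x hx.1 y hy hxy
      have := h1 y
      omega

theorem strictE_zero_empty {α : Type*} [Fintype α] [PartialOrder α] :
    (strictE (∅ : Finset α) 0).card = 1 := by
  rw [Finset.card_eq_one]
  refine ⟨fun _ => 0, ?_⟩
  ext f
  rw [mem_strictE, Finset.mem_singleton]
  constructor
  · intro h; funext x; exact h.2.1 x (by simp)
  · rintro rfl
    simp
    omega

theorem strictE_zero {α : Type*} [Fintype α] [PartialOrder α] (S : Finset α) (hS : S.Nonempty) :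
    (strictE S 0).card = 0 := by
  rw [Finset.card_eq_zero, Finset.eq_empty_iff_forall_notMem]
  intro f hf
  rw [mem_strictE] at hf
  obtain ⟨x, hx⟩ := hS
  have := hf.1 x
  have := hf.2.2.1 x hx
  omega

theorem strictE_empty {α : Type*} [Fintype α] [PartialOrder α] (k : ℕ) :
    (strictE (∅ : Finset α) (k + 1)).card = 0 := by
  rw [Finset.card_eq_zero, Finset.eq_empty_iff_forall_notMem]
  intro f hf
  rw [mem_strictE] at hf
  obtain ⟨x, hx, _⟩ := hf.2.2.2.1 1 le_rfl (by omega)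
  simp at hx

open Classical in
theorem strictE_sum {α : Type*} [Fintype α] [PartialOrder α] (N : ℕ) : ∀ (S : Finset α),
    S.card ≤ N →
    ∑ k ∈ Finset.range (N + 1), (-1 : ℤ) ^ k * ((strictE S k).card : ℤ) = (-1) ^ S.card := by
  induction N with
  | zero =>
    intro S hS
    obtain rfl : S = ∅ := Finset.card_eq_zero.1 (by omega)
    simp [strictE_zero_empty]
  | succ N ih =>
    intro S hS
    rw [Finset.sum_range_succ']
    rcases S.eq_empty_or_nonempty with rfl | hne
    · simp [strictE_zero_empty, strictE_empty]
    · rw [strictE_zero S hne]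
      have hmax : (maxE S).Nonempty := by
        obtain ⟨x, hx⟩ := S.exists_maximal hne
        exact ⟨x, (mem_maxE _ _).2 ⟨hx.1, fun y hy hxy => hx.not_gt hy hxy⟩⟩
      have hsub : maxE S ⊆ S := fun x hx => ((mem_maxE _ _).1 hx).1
      have step : ∀ A ∈ (maxE S).powerset.erase ∅,
          ∑ k ∈ Finset.range (N + 1), (-1 : ℤ) ^ k * ((strictE (S \ A) k).card : ℤ)
            = (-1) ^ S.card * (-1) ^ A.card := by
        intro A hA
        rw [Finset.mem_erase, Finset.mem_powerset] at hA
        have h1 : (S \ A).card + A.card = S.card :=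
          Finset.card_sdiff_add_card_eq_card (hA.2.trans hsub)
        have h2 : 0 < A.card := Finset.card_pos.2 (Finset.nonempty_iff_ne_empty.2 hA.1)
        rw [ih _ (by omega), ← h1, pow_add, mul_assoc, ← mul_pow]
        simp
      have h3 : ∑ A ∈ (maxE S).powerset.erase ∅, (-1 : ℤ) ^ A.card = -1 := by
        have h4 := Finset.sum_powerset_neg_one_pow_card_of_nonempty hmax
        rw [← Finset.add_sum_erase _ _ (Finset.empty_mem_powerset _)] at h4
        simp only [Finset.card_empty, pow_zero] at h4
        linarith
      calc _ = ∑ k ∈ Finset.range (N + 1), ∑ A ∈ (maxE S).powerset.erase ∅,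
              -((-1 : ℤ) ^ k * ((strictE (S \ A) k).card : ℤ)) := by
            simp only [Nat.cast_zero, mul_zero, add_zero]
            apply Finset.sum_congr rfl
            intro k _
            rw [strictE_succ]
            push_cast
            rw [Finset.mul_sum]
            apply Finset.sum_congr rfl
            intro A _
            ring
        _ = ∑ A ∈ (maxE S).powerset.erase ∅, -((-1 : ℤ) ^ S.card * (-1) ^ A.card) := by
            rw [Finset.sum_comm]
            apply Finset.sum_congr rfl
            intro A hA
            rw [Finset.sum_neg_distrib, step A hA]
        _ = _ := by
            rw [Finset.sum_neg_distrib, ← Finset.mul_sum, h3]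
            ring

open Classical in
theorem strict_card {α : Type*} [Fintype α] [Preorder α]
    [Fintype (Antisymmetrization α (· ≤ ·))] (k : ℕ) :
    (strictE (Finset.univ : Finset (Antisymmetrization α (· ≤ ·))) k).card =
    (Finset.univ.filter (fun w : α → Fin k => Function.Surjective w ∧
      (∀ i j, i ≤ j → w i ≤ w j) ∧ (∀ i j, i < j → w i < w j))).card := by
  have key : ∀ f ∈ strictE (Finset.univ : Finset (Antisymmetrization α (· ≤ ·))) k, ∀ q,
      1 ≤ f q ∧ f q ≤ k := by
    intro f hf q
    rw [mem_strictE] at hf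
    exact ⟨hf.2.2.1 q (Finset.mem_univ _), hf.1 q⟩
  apply Finset.card_bij (fun f hf => fun i : α =>
    (⟨f (toAntisymmetrization (· ≤ ·) i) - 1, by have := key f hf (toAntisymmetrization (· ≤ ·) i); omega⟩ : Fin k))
  · intro f hf
    have hk := key f hf
    rw [mem_strictE] at hf
    obtain ⟨h1, h2, h3, h4, h5⟩ := hf
    have hlt : ∀ i j : α, i < j → f (toAntisymmetrization (· ≤ ·) i) < f (toAntisymmetrization (· ≤ ·) j) :=
      fun i j hij => h5 _ (Finset.mem_univ _) _ (Finset.mem_univ _)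
        (toAntisymmetrization_lt_toAntisymmetrization_iff.2 hij)
    rw [Finset.mem_filter]
    refine ⟨Finset.mem_univ _, ?_, ?_, ?_⟩
    · intro j
      obtain ⟨q, _, hq⟩ := h4 (j + 1) (by omega) (by omega)
      induction q using Antisymmetrization.ind with
      | _ i =>
      refine ⟨i, ?_⟩
      apply Fin.ext
      simp only [hq]
      omega
    · intro i j hij
      rw [Fin.mk_le_mk]
      by_cases hji : j ≤ i
      · have : toAntisymmetrization (· ≤ ·) i = toAntisymmetrization (· ≤ ·) j :=
          Quotient.sound ⟨hij, hji⟩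
        rw [this]
      · have := hlt i j (lt_of_le_not_ge hij hji)
        omega
    · intro i j hij
      rw [Fin.mk_lt_mk]
      have := hlt i j hij
      have := hk (toAntisymmetrization (· ≤ ·) i)
      omega
  · intro f hf g hg h
    funext q
    have h1 := key f hf q
    have h2 := key g hg q
    induction q using Antisymmetrization.ind with
    | _ i =>
    have := congrArg Fin.val (congrFun h i)
    simp only at this
    omega
  · intro w hw
    rw [Finset.mem_filter] at hw
    obtain ⟨-, h1, h2, h3⟩ := hw
    refine ⟨Quotient.lift (fun i => (w i : ℕ) + 1) ?_, ?_, ?_⟩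
    · intro a b hab
      have := le_antisymm (h2 a b hab.1) (h2 b a hab.2)
      simp [this]
    · refine (mem_strictE _ _ _).2 ⟨?_, ?_, ?_, ?_, ?_⟩
      · intro q
        induction q using Quotient.ind with
        | _ i => simp only [Quotient.lift_mk]; omega
      · simp
      · intro q _
        induction q using Quotient.ind with
        | _ i => simp
      · intro j hj hk
        obtain ⟨i, hi⟩ := h1 ⟨j - 1, by omega⟩
        refine ⟨Quotient.mk _ i, Finset.mem_univ _, ?_⟩
        simp only [Quotient.lift_mk, hi]
        omega
      · intro x _ y _
        induction x using Quotient.ind with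
        | _ i =>
        induction y using Quotient.ind with
        | _ j =>
        intro hij
        have := h3 i j (toAntisymmetrization_lt_toAntisymmetrization_iff.1 hij)
        simp only [Quotient.lift_mk]
        omega
    · funext i
      apply Fin.ext
      simp [toAntisymmetrization]

open Classical in
theorem strict_sum {α : Type*} [Fintype α] [Preorder α] (N : ℕ) (hN : Fintype.card α ≤ N) :
    ∑ k ∈ Finset.range (N + 1), (-1 : ℤ) ^ k *
    ((Finset.univ.filter (fun w : α → Fin k => Function.Surjective w ∧
      (∀ i j, i ≤ j → w i ≤ w j) ∧ (∀ i j, i < j → w i < w j))).card : ℤ)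
      = (-1) ^ Nat.card (Antisymmetrization α (· ≤ ·)) := by
  have : Finite (Antisymmetrization α (· ≤ ·)) := Quotient.finite _
  let _ : Fintype (Antisymmetrization α (· ≤ ·)) := Fintype.ofFinite _
  rw [Nat.card_eq_fintype_card, ← Finset.card_univ, ← strictE_sum N]
  · apply Finset.sum_congr rfl
    intro k _
    rw [strict_card]
  · rw [Finset.card_univ]
    exact (Fintype.card_le_of_surjective (toAntisymmetrization (α := α) (· ≤ ·))
      (fun q => Antisymmetrization.ind _ (fun i => ⟨i, rfl⟩) q)).trans hN

open Classical in
/-- Non-commutative duality principle, combinatorial form: for a quasi-poset `P` on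
`[n]` and a surjection `u : Fin n → Fin m`,
`[u ∈ W_P] = (-1)^{cl(P)} · Σ_{w ∈ W^str_P, u = σ∘w for a non-decreasing surjection σ}
(-1)^{max(w)}`. -/
theorem noncommutative_duality {n m : ℕ} (le : Fin n → Fin n → Prop)
    (hrefl : ∀ i, le i i)
    (htrans : ∀ i j k, le i j → le j k → le i k)
    (u : Fin n → Fin m) (hu : Function.Surjective u) :
    (if (∀ i j, le i j → u i ≤ u j) then (1 : ℤ) else 0) =
      (-1) ^ clQP le *
        ∑ᶠ w : Σ k : ℕ, Fin n → Fin k,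
          if (Function.Surjective w.2 ∧
              (∀ i j, le i j → w.2 i ≤ w.2 j) ∧
              (∀ i j, le i j → w.2 i = w.2 j → le j i) ∧
              ∃ σ : Fin w.1 → Fin m, Monotone σ ∧ Function.Surjective σ ∧
                u = σ ∘ w.2) then
            ((-1 : ℤ)) ^ w.1
          else 0 := by
  by_cases hL : ∀ i j, le i j → u i ≤ u j
  swap
  · rw [if_neg hL, finsum_eq_zero_of_forall_eq_zero, mul_zero]
    intro w
    apply if_neg
    rintro ⟨-, h2, -, σ, hσ, -, rfl⟩
    exact hL fun i j hij => hσ (h2 i j hij)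
  rw [if_pos hL]
  let P : Preorder (Fin n) :=
    { le := fun i j => u i < u j ∨ (u i = u j ∧ le i j)
      lt := fun i j => (u i < u j ∨ (u i = u j ∧ le i j)) ∧ ¬ (u j < u i ∨ (u j = u i ∧ le j i))
      lt_iff_le_not_ge := fun i j => Iff.rfl
      le_refl := fun i => Or.inr ⟨rfl, hrefl i⟩
      le_trans := by
        intro i j k h1 h2
        rcases h1 with h1 | ⟨h1, h1'⟩ <;> rcases h2 with h2 | ⟨h2, h2'⟩
        · exact Or.inl (h1.trans h2)
        · exact Or.inl (h2 ▸ h1)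
        · exact Or.inl (h1 ▸ h2)
        · exact Or.inr ⟨h1.trans h2, htrans _ _ _ h1' h2'⟩ }
  have hPle : ∀ i j, P.le i j ↔ (u i < u j ∨ (u i = u j ∧ le i j)) := fun i j => Iff.rfl
  have hPlt : ∀ i j, P.lt i j ↔ (P.le i j ∧ ¬ P.le j i) := P.lt_iff_le_not_ge
  have hsum := @strict_sum (Fin n) _ P n (by simp)
  have hcl : clQP le = Nat.card (@Antisymmetrization (Fin n) P.le _) := by
    unfold clQP Antisymmetrization
    have : (fun i j : Fin n => le i j ∧ le j i) = (AntisymmRel.setoid (Fin n) P.le).r := by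
      funext i j
      apply propext
      change _ ↔ (P.le i j ∧ P.le j i)
      rw [hPle, hPle]
      constructor
      · rintro ⟨h1, h2⟩
        have := le_antisymm (hL _ _ h1) (hL _ _ h2)
        exact ⟨Or.inr ⟨this, h1⟩, Or.inr ⟨this.symm, h2⟩⟩
      · rintro ⟨h1 | h1, h2 | h2⟩
        · exact absurd h1 h2.asymm
        · exact absurd h1 (by simp [h2.1])
        · exact absurd h2 (by simp [h1.1])
        · exact ⟨h1.2, h2.2⟩
    rw [this]
    rfl
  have hcond : ∀ (k : ℕ) (w : Fin n → Fin k), (Function.Surjective w ∧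
              (∀ i j, le i j → w i ≤ w j) ∧
              (∀ i j, le i j → w i = w j → le j i) ∧
              ∃ σ : Fin k → Fin m, Monotone σ ∧ Function.Surjective σ ∧
                u = σ ∘ w) ↔ (Function.Surjective w ∧
      (∀ i j, P.le i j → w i ≤ w j) ∧ (∀ i j, P.lt i j → w i < w j)) := by
    intro k w
    constructor
    · rintro ⟨h1, h2, h3, σ, hσ, -, hus⟩
      have hu' : ∀ i j, u i < u j → w i < w j := by
        intro i j hij
        by_contra hc
        have := hσ (not_lt.1 hc)
        rw [hus] at hij
        exact absurd hij (not_lt.2 this)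
      refine ⟨h1, ?_, ?_⟩
      · rintro i j (h | h)
        · exact (hu' i j h).le
        · exact h2 i j h.2
      · intro i j hij
        rw [hPlt, hPle, hPle] at hij
        rcases hij with ⟨h | h, h'⟩
        · exact hu' i j h
        · refine lt_of_le_of_ne (h2 i j h.2) fun he => h' (Or.inr ⟨h.1.symm, h3 i j h.2 he⟩)
    · rintro ⟨h1, h2, h3⟩
      have hu' : ∀ i j, u i < u j → w i < w j := by
        intro i j hij
        apply h3
        rw [hPlt, hPle, hPle]
        refine ⟨Or.inl hij, ?_⟩
        rintro (h | h)
        · exact absurd h hij.asymm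
        · exact absurd hij (by simp [h.1])
      have hPl : ∀ i j, le i j → P.le i j := by
        intro i j hij
        rcases (hL i j hij).lt_or_eq with h | h
        · exact Or.inl h
        · exact Or.inr ⟨h, hij⟩
      obtain ⟨s, hs⟩ := h1.hasRightInverse
      have hsu : ∀ i, u (s (w i)) = u i := by
        intro i
        have hw := hs (w i)
        rcases lt_trichotomy (u (s (w i))) (u i) with h | h | h
        · exact absurd (hu' _ _ h) (by simp [hw])
        · exact h
        · exact absurd (hu' _ _ h) (by simp [hw])
      refine ⟨h1, fun i j hij => h2 i j (hPl i j hij), ?_, fun a => u (s a), ?_, ?_, ?_⟩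
      · intro i j hij he
        by_contra hc
        have : P.lt i j := by
          rw [hPlt]
          refine ⟨hPl i j hij, ?_⟩
          rintro (h | h)
          · exact absurd h (not_lt.2 (hL i j hij))
          · exact hc h.2
        exact absurd (h3 i j this) (by simp [he])
      · intro a b hab
        by_contra hc
        have := hu' _ _ (not_le.1 hc)
        rw [hs, hs] at this
        exact absurd hab (not_le.2 this)
      · intro b
        obtain ⟨i, rfl⟩ := hu b
        exact ⟨w i, hsu i⟩
      · funext i
        exact (hsu i).symm
  rw [finsum_eq_sum_of_support_subset (s := (Finset.range (n + 1)).sigma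
    (fun k => (Finset.univ : Finset (Fin n → Fin k))))]
  · rw [Finset.sum_sigma, hcl]
    have : ∀ k ∈ Finset.range (n + 1), (∑ w : Fin n → Fin k, if (Function.Surjective w ∧
              (∀ i j, le i j → w i ≤ w j) ∧
              (∀ i j, le i j → w i = w j → le j i) ∧
              ∃ σ : Fin k → Fin m, Monotone σ ∧ Function.Surjective σ ∧
                u = σ ∘ w) then ((-1 : ℤ)) ^ k else 0) = (-1 : ℤ) ^ k *
    ((Finset.univ.filter (fun w : Fin n → Fin k => Function.Surjective w ∧
      (∀ i j, P.le i j → w i ≤ w j) ∧ (∀ i j, P.lt i j → w i < w j))).card : ℤ) := by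
      intro k _
      simp only [hcond]
      rw [← Finset.sum_filter, Finset.sum_const, nsmul_eq_mul, mul_comm]
    rw [Finset.sum_congr rfl this]
    have h2 : ∑ k ∈ Finset.range (n + 1), (-1 : ℤ) ^ k *
    ((Finset.univ.filter (fun w : Fin n → Fin k => Function.Surjective w ∧
      (∀ i j, P.le i j → w i ≤ w j) ∧ (∀ i j, P.lt i j → w i < w j))).card : ℤ) =
      (-1) ^ Nat.card (@Antisymmetrization (Fin n) P.le _) := by
      convert hsum
    rw [h2, ← mul_pow]
    simp
  · intro w hw
    rw [Function.mem_support] at hw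
    have hw' : Function.Surjective w.2 := by
      by_contra hc
      exact hw (if_neg fun h => hc h.1)
    have := Fintype.card_le_of_surjective _ hw'
    simp only [Fintype.card_fin] at this
    simp only [Finset.mem_coe, Finset.mem_sigma, Finset.mem_range, Finset.mem_univ, and_true]
    omega
end

section
/- For every quasi-poset P on [n]: ehr^str_P(1) = 1 if P is discrete and 0 otherwise, and (-1)^{cl(P)} · ehr_P(-1) = 1 if P is discrete and 0 otherwise. -/
open Polynomial

namespace EhrAux

open Classical in
/-- upsets of S -/
noncomputable def ups {n : ℕ} (le : Fin n → Fin n → Prop) (S : Finset (Fin n)) :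
    Finset (Finset (Fin n)) :=
  S.powerset.filter (fun V => ∀ i ∈ V, ∀ j ∈ S, le i j → j ∈ V)

/-- monotone maps on S with values below k, extended by zero -/
def M {n : ℕ} (le : Fin n → Fin n → Prop) (S : Finset (Fin n)) (k : ℕ) : Set (Fin n → ℕ) :=
  {f | (∀ i ∈ S, f i < k) ∧ (∀ i, i ∉ S → f i = 0) ∧
    ∀ i ∈ S, ∀ j ∈ S, le i j → f i ≤ f j}

lemma M_finite {n : ℕ} (le : Fin n → Fin n → Prop) (S : Finset (Fin n)) (k : ℕ) :
    (M le S k).Finite := by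
  apply (Set.finite_Iic (fun _ : Fin n => k)).subset
  intro f hf i
  by_cases h : i ∈ S
  · exact (hf.1 i h).le
  · simp [hf.2.1 i h]

open Classical in
lemma M_succ {n : ℕ} (le : Fin n → Fin n → Prop) (S : Finset (Fin n)) (k : ℕ) :
    (M le S (k+1)).ncard = ∑ V ∈ ups le S, (M le V k).ncard := by
  have hfin := M_finite le S (k+1)
  rw [Set.ncard_eq_toFinset_card _ hfin]
  rw [Finset.card_eq_sum_card_fiberwise (f := fun f => S.filter (fun i => 1 ≤ f i))
    (t := ups le S)]
  · apply Finset.sum_congr rfl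
    intro V hV
    simp only [ups, Finset.mem_filter, Finset.mem_powerset] at hV
    obtain ⟨hVS, hup⟩ := hV
    rw [Set.ncard_eq_toFinset_card _ (M_finite le V k)]
    refine Finset.card_bij' (fun f _ i => f i - 1) (fun g _ i => if i ∈ V then g i + 1 else 0)
      ?_ ?_ ?_ ?_
    · intro f hf
      simp only [Finset.mem_filter, Set.Finite.mem_toFinset] at hf ⊢
      obtain ⟨⟨h1, h2, h3⟩, rfl⟩ := hf
      refine ⟨?_, ?_, ?_⟩
      · intro i hi
        simp only [Finset.mem_filter] at hi ⊢
        have := h1 i hi.1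
        omega
      · intro i hi
        simp only [Finset.mem_filter, not_and] at hi ⊢
        by_cases h : i ∈ S
        · have := hi h
          omega
        · simp [h2 i h]
      · intro i hi j hj hij
        simp only [Finset.mem_filter] at hi hj ⊢
        have := h3 i hi.1 j hj.1 hij
        omega
    · intro g hg
      simp only [Finset.mem_filter, Set.Finite.mem_toFinset] at hg ⊢
      obtain ⟨h1, h2, h3⟩ := hg
      refine ⟨⟨?_, ?_, ?_⟩, ?_⟩
      · intro i hi
        by_cases h : i ∈ V
        · simp [h, h1 i h]
        · simp [h]
      · intro i hi
        have : i ∉ V := fun h => hi (hVS h)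
        simp [this]
      · intro i hi j hj hij
        by_cases h : i ∈ V
        · have hj' := hup i h j hj hij
          simp [h, hj', h3 i h j hj' hij]
        · simp [h]
      · ext i
        simp only [Finset.mem_filter]
        constructor
        · rintro ⟨_, h⟩
          by_contra h'
          simp [h'] at h
        · intro h
          exact ⟨hVS h, by simp [h]⟩
    · intro f hf
      simp only [Finset.mem_filter, Set.Finite.mem_toFinset] at hf
      obtain ⟨⟨h1, h2, h3⟩, rfl⟩ := hf
      funext i
      simp only [Finset.mem_filter]
      split_ifs with h
      · omega
      · by_cases hS : i ∈ S
        · have : ¬ 1 ≤ f i := fun h' => h ⟨hS, h'⟩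
          omega
        · simp [h2 i hS]
    · intro g hg
      simp only [Set.Finite.mem_toFinset] at hg
      obtain ⟨h1, h2, h3⟩ := hg
      funext i
      by_cases h : i ∈ V
      · simp [h]
      · simp [h, h2 i h]
  · intro f hf
    simp only [Set.Finite.coe_toFinset] at hf
    obtain ⟨h1, h2, h3⟩ := hf
    simp only [ups, Finset.coe_filter, Finset.mem_powerset, Set.mem_ofPred_eq, Finset.mem_filter]
    refine ⟨Finset.filter_subset _ _, ?_⟩
    intro i hi j hj hij
    exact ⟨hj, hi.2.trans (h3 i hi.1 j hj hij)⟩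

open Classical in
/-- number of classes met by V -/
noncomputable def cl {n : ℕ} (le : Fin n → Fin n → Prop) (V : Finset (Fin n)) : ℕ :=
  (V.image (Quot.mk (fun i j : Fin n => le i j ∧ le j i))).card

open Classical in
/-- expected value at minus one -/
noncomputable def h {n : ℕ} (le : Fin n → Fin n → Prop) (V : Finset (Fin n)) : ℚ :=
  if (∀ i ∈ V, ∀ j ∈ V, le i j → le j i) then (-1) ^ cl le V else 0

lemma mk_eq {n : ℕ} (le : Fin n → Fin n → Prop)
    (hrefl : ∀ i, le i i) (htrans : ∀ i j k, le i j → le j k → le i k) (i j : Fin n) :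
    Quot.mk (fun i j : Fin n => le i j ∧ le j i) i = Quot.mk _ j ↔ le i j ∧ le j i := by
  have he : Equivalence (fun i j : Fin n => le i j ∧ le j i) :=
    ⟨fun i => ⟨hrefl i, hrefl i⟩, fun h => ⟨h.2, h.1⟩,
      fun h h' => ⟨htrans _ _ _ h.1 h'.1, htrans _ _ _ h'.2 h.2⟩⟩
  constructor
  · intro h
    exact he.eqvGen_iff.1 (Quot.eqvGen_exact h)
  · exact fun h => Quot.sound h

open Classical in
lemma sum_h {n : ℕ} (le : Fin n → Fin n → Prop)
    (hrefl : ∀ i, le i i) (htrans : ∀ i j k, le i j → le j k → le i k)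
    (S : Finset (Fin n)) (hS : S.Nonempty) : ∑ V ∈ ups le S, h le V = 0 := by
  obtain ⟨m, hm, hmax⟩ : ∃ m ∈ S, ∀ j ∈ S, le m j → le j m := by
    let pre : Preorder (Fin n) := { le := le, lt := fun a b => le a b ∧ ¬ le b a, le_refl := hrefl, le_trans := htrans, lt_iff_le_not_ge := fun _ _ => Iff.rfl }
    obtain ⟨m, hm⟩ := @Finset.exists_maximal (Fin n) pre.toLE ⟨htrans⟩ S hS
    exact ⟨m, hm.1, fun j hj hmj => hm.2 hj hmj⟩
  set C := S.filter (fun j => le m j) with hC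
  have memC : ∀ j, j ∈ C ↔ j ∈ S ∧ le m j := by simp [hC]
  have hmC : m ∈ C := (memC m).2 ⟨hm, hrefl m⟩
  unfold h
  rw [← Finset.sum_filter]
  have hdef : ∀ V : Finset (Fin n), V ∈ (ups le S).filter (fun V => ∀ i ∈ V, ∀ j ∈ V, le i j → le j i) ↔
      (V ⊆ S ∧ ∀ i ∈ V, ∀ j ∈ S, le i j → j ∈ V) ∧ ∀ i ∈ V, ∀ j ∈ V, le i j → le j i := by
    intro V; simp [ups]
  -- dichotomy
  have hsub : ∀ V : Finset (Fin n), (∀ i ∈ V, ∀ j ∈ S, le i j → j ∈ V) → m ∈ V → C ⊆ V := by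
    intro V hV hmV j hj
    exact hV m hmV j ((memC j).1 hj).1 ((memC j).1 hj).2
  have hdis : ∀ V : Finset (Fin n), (∀ i ∈ V, ∀ j ∈ S, le i j → j ∈ V) → m ∉ V → ∀ j ∈ C, j ∉ V := by
    intro V hV hmV j hj hjV
    exact hmV (hV j hjV m hm (hmax j ((memC j).1 hj).1 ((memC j).1 hj).2))
  have hcard : ∀ V : Finset (Fin n), m ∉ V → (∀ i ∈ V, ∀ j ∈ S, le i j → j ∈ V) → V ⊆ S →
      cl le (V ∪ C) = cl le V + 1 := by
    intro V hmV hV hVS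
    unfold cl
    have : (V ∪ C).image (Quot.mk (fun i j : Fin n => le i j ∧ le j i)) =
        insert (Quot.mk _ m) (V.image (Quot.mk _)) := by
      rw [Finset.image_union, Finset.union_comm, Finset.insert_eq]
      congr 1
      ext x
      simp only [Finset.mem_image, Finset.mem_singleton]
      constructor
      · rintro ⟨j, hj, rfl⟩
        have := (memC j).1 hj
        exact Quot.sound ⟨hmax j this.1 this.2, this.2⟩
      · rintro rfl
        exact ⟨m, hmC, rfl⟩
    rw [this, Finset.card_insert_of_notMem]
    intro hmem
    obtain ⟨j, hj, hjm⟩ := Finset.mem_image.1 hmem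
    have := (mk_eq le hrefl htrans j m).1 hjm
    exact hmV (hV j hj m hm this.1)
  have hrem : ∀ V : Finset (Fin n), C ⊆ V → (V \ C) ∪ C = V := fun V hV => Finset.sdiff_union_of_subset hV
  have hclosed : ∀ V : Finset (Fin n), ((V ⊆ S ∧ ∀ i ∈ V, ∀ j ∈ S, le i j → j ∈ V) ∧
      ∀ i ∈ V, ∀ j ∈ V, le i j → le j i) → 
      (((V \ C) ⊆ S ∧ ∀ i ∈ V \ C, ∀ j ∈ S, le i j → j ∈ V \ C) ∧
      ∀ i ∈ V \ C, ∀ j ∈ V \ C, le i j → le j i) := by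
    rintro V ⟨⟨h1, h2⟩, h3⟩
    refine ⟨⟨Finset.sdiff_subset.trans h1, ?_⟩, ?_⟩
    · intro i hi j hj hij
      simp only [Finset.mem_sdiff, memC] at hi ⊢
      have hjV := h2 i hi.1 j hj hij
      refine ⟨hjV, fun hh => hi.2 ⟨h1 hi.1, htrans _ _ _ hh.2 (h3 i hi.1 j hjV hij)⟩⟩
    · intro i hi j hj
      exact h3 i (Finset.mem_sdiff.1 hi).1 j (Finset.mem_sdiff.1 hj).1
  refine Finset.sum_involution (fun V _ => if m ∈ V then V \ C else V ∪ C) ?_ ?_ ?_ ?_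
  · intro V hV
    rw [hdef] at hV
    split_ifs with hmV
    · have hc := hclosed V hV
      have := hcard (V \ C) (by simp [hmC]) hc.1.2 hc.1.1
      rw [hrem V (hsub V hV.1.2 hmV)] at this
      rw [this, pow_succ]; ring
    · rw [hcard V hmV hV.1.2 hV.1.1, pow_succ]; ring
  · intro V hV _
    split_ifs with hmV
    · intro heq
      rw [← heq] at hmV
      simp [hmC] at hmV
    · intro heq
      apply hmV
      rw [← heq]
      simp [hmC]
  · intro V hV
    rw [hdef] at hV
    rw [hdef]
    split_ifs with hmV
    · exact hclosed V hV
    · obtain ⟨⟨h1, h2⟩, h3⟩ := hV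
      have key : ∀ i ∈ C, ∀ j ∈ S, le i j → le m j := fun i hi j _ hij =>
        htrans _ _ _ ((memC i).1 hi).2 hij
      refine ⟨⟨Finset.union_subset h1 (Finset.filter_subset _ _), ?_⟩, ?_⟩
      · intro i hi j hj hij
        rcases Finset.mem_union.1 hi with hi | hi
        · exact Finset.mem_union_left _ (h2 i hi j hj hij)
        · exact Finset.mem_union_right _ ((memC j).2 ⟨hj, key i hi j hj hij⟩)
      · intro i hi j hj hij
        have hjS : j ∈ S := by
          rcases Finset.mem_union.1 hj with hj | hj
          · exact h1 hj
          · exact ((memC j).1 hj).1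
        rcases Finset.mem_union.1 hi with hi | hi
        · exact h3 i hi j (h2 i hi j hjS hij) hij
        · exact htrans _ _ _ (hmax j hjS (key i hi j hjS hij)) ((memC i).1 hi).2
  · intro V hV
    rw [hdef] at hV
    by_cases hmV : m ∈ V
    · simp only [hmV, if_true]
      rw [if_neg (by simp [hmC]), hrem V (hsub V hV.1.2 hmV)]
    · simp only [hmV, if_false]
      rw [if_pos (by simp [hmC])]
      ext i
      have := hdis V hV.1.2 hmV i
      simp only [Finset.mem_sdiff, Finset.mem_union]
      tauto

lemma exists_sum (R : ℚ[X]) : ∃ Q : ℚ[X], ∀ k : ℕ,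
    Q.eval (k : ℚ) = ∑ j ∈ Finset.range k, R.eval (j : ℚ) := by
  induction R using Polynomial.induction_on' with
  | add a b ha hb =>
    obtain ⟨A, hA⟩ := ha
    obtain ⟨B, hB⟩ := hb
    exact ⟨A + B, fun k => by simp [hA, hB, Finset.sum_add_distrib]⟩
  | monomial d c =>
    refine ⟨C (c / (d + 1)) * (Polynomial.bernoulli (d+1) - C (_root_.bernoulli (d+1))), fun k => ?_⟩
    have := Polynomial.sum_range_pow_eq_bernoulli_sub k d
    simp only [eval_mul, eval_sub, eval_C, eval_monomial, ← Finset.mul_sum]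
    rw [← this]
    field_simp

lemma eq_of_nat {A B : ℚ[X]} (hAB : ∀ k : ℕ, A.eval (k : ℚ) = B.eval (k : ℚ)) : A = B := by
  apply Polynomial.eq_of_infinite_eval_eq
  apply (Set.infinite_range_of_injective (Nat.cast_injective (R := ℚ))).mono
  rintro _ ⟨k, rfl⟩
  exact hAB k

open Classical in
lemma main {n : ℕ} (le : Fin n → Fin n → Prop)
    (hrefl : ∀ i, le i i) (htrans : ∀ i j k, le i j → le j k → le i k)
    (S : Finset (Fin n)) :
    ∃ p : ℚ[X], (∀ k : ℕ, p.eval (k : ℚ) = (M le S k).ncard) ∧ p.eval (-1) = h le S := by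
  induction S using Finset.strongInduction with
  | H S ih =>
    rcases S.eq_empty_or_nonempty with rfl | hne
    · refine ⟨1, fun k => ?_, ?_⟩
      · have : M le ∅ k = {0} := by
          ext f
          simp [M, funext_iff]
        simp [this]
      · simp [h, cl]
    · have hSm : S ∈ ups le S := by
        simp only [ups, Finset.mem_filter, Finset.mem_powerset]
        exact ⟨subset_rfl, fun _ _ j hj _ => hj⟩
      choose! P hP1 hP2 using ih
      have hss : ∀ V ∈ (ups le S).erase S, V ⊂ S := by
        intro V hV
        simp only [ups, Finset.mem_erase, Finset.mem_filter, Finset.mem_powerset] at hV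
        exact Finset.ssubset_iff_subset_ne.2 ⟨hV.2.1, hV.1⟩
      obtain ⟨Q, hQ⟩ := exists_sum (∑ V ∈ (ups le S).erase S, P V)
      have hrec : ∀ k : ℕ, ((M le S (k+1)).ncard : ℚ) =
          (∑ V ∈ (ups le S).erase S, P V).eval (k : ℚ) + (M le S k).ncard := by
        intro k
        rw [M_succ, ← Finset.sum_erase_add _ _ hSm, eval_finsetSum]
        push_cast
        congr 1
        exact Finset.sum_congr rfl fun V hV => (hP1 V (hss V hV) k).symm
      have h0 : (M le S 0).ncard = 0 := by
        obtain ⟨i, hi⟩ := hne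
        have : M le S 0 = ∅ := by
          ext f
          simp only [M, Set.mem_ofPred_eq, Set.mem_empty_iff_false, iff_false]
          intro hf
          exact absurd (hf.1 i hi) (by simp)
        simp [this]
      refine ⟨Q, ?_, ?_⟩
      · intro k
        induction k with
        | zero => rw [hQ]; simp [h0]
        | succ k ihk =>
          rw [hrec, ← ihk, hQ, hQ, Finset.sum_range_succ, add_comm]
      · have hpoly : Q.comp (X + 1) = Q + ∑ V ∈ (ups le S).erase S, P V := by
          apply eq_of_nat
          intro k
          have h1 := hQ (k+1)
          rw [Finset.sum_range_succ, ← hQ k] at h1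
          push_cast at h1
          simpa using h1
        have h1 := congrArg (Polynomial.eval (-1 : ℚ)) hpoly
        have h2 := hQ 0
        simp only [Nat.cast_zero, Finset.range_zero, Finset.sum_empty] at h2
        simp only [eval_comp, eval_add, eval_X, eval_one, neg_add_cancel, h2,
          eval_finsetSum] at h1
        rw [Finset.sum_congr rfl fun V hV => hP2 V (hss V hV)] at h1
        have h3 := sum_h le hrefl htrans S hne
        rw [← Finset.sum_erase_add _ _ hSm] at h3
        linarith

lemma LCount_eq {n : ℕ} (le : Fin n → Fin n → Prop) (k : ℕ) :
    LCount le k = (M le Finset.univ k).ncard := by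
  unfold LCount
  rw [← Nat.card_coe_set_eq]
  refine Nat.card_congr ⟨fun f => ⟨fun i => (f.1 i : ℕ), ?_⟩,
    fun g => ⟨fun i => ⟨g.1 i, g.2.1 i (Finset.mem_univ i)⟩, ?_⟩, ?_, ?_⟩
  · exact ⟨fun i _ => (f.1 i).2, fun i hi => absurd (Finset.mem_univ i) hi,
      fun i _ j _ hij => f.2 i j hij⟩
  · intro i j hij
    exact g.2.2.2 i (Finset.mem_univ i) j (Finset.mem_univ j) hij
  · intro f; rfl
  · intro g; rfl

lemma cl_univ {n : ℕ} (le : Fin n → Fin n → Prop) : cl le Finset.univ = clQP le := by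
  classical
  unfold cl clQP
  have := Fintype.ofFinite (Quot (fun i j : Fin n => le i j ∧ le j i))
  rw [Finset.image_univ_of_surjective Quot.mk_surjective, Nat.card_eq_fintype_card,
    Finset.card_univ]

end EhrAux

open Classical in
/-- `ehr^str_P(1) = (-1)^{cl(P)} ehr_P(-1) = 1` if `P` is discrete, `0` otherwise. -/
theorem eval_at_one {n : ℕ} (le : Fin n → Fin n → Prop)
    (hrefl : ∀ i, le i i)
    (htrans : ∀ i j k, le i j → le j k → le i k)
    (p q : ℚ[X])
    (hp : ∀ k : ℕ, p.eval (k : ℚ) = LCount le k)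
    (hq : ∀ k : ℕ, q.eval (k : ℚ) = LstrCount le k) :
    (q.eval (1 : ℚ) = if (∀ i j, le i j → le j i) then 1 else 0) ∧
    ((-1 : ℚ) ^ clQP le * p.eval (-1 : ℚ) =
      if (∀ i j, le i j → le j i) then 1 else 0) := by
  constructor
  · have h1 := hq 1
    rw [Nat.cast_one] at h1
    rw [h1]
    unfold LstrCount
    split_ifs with hd
    · have : Nat.card {f : Fin n → Fin 1 //
          (∀ i j, le i j → f i ≤ f j) ∧ (∀ i j, le i j → f i = f j → le j i)} = 1 := by
        rw [Nat.card_eq_one_iff_unique]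
        refine ⟨⟨fun a b => Subtype.ext (Subsingleton.elim _ _)⟩,
          ⟨⟨fun _ => 0, fun _ _ _ => le_refl _, fun i j hij _ => hd i j hij⟩⟩⟩
      rw [this]; simp
    · have : IsEmpty {f : Fin n → Fin 1 //
          (∀ i j, le i j → f i ≤ f j) ∧ (∀ i j, le i j → f i = f j → le j i)} :=
        ⟨fun f => hd fun i j hij => f.2.2 i j hij (Subsingleton.elim _ _)⟩
      rw [Nat.card_of_isEmpty]; simp
  · obtain ⟨p', hp1, hp2⟩ := EhrAux.main le hrefl htrans Finset.univ
    have : p = p' := EhrAux.eq_of_nat fun k => by rw [hp, hp1, EhrAux.LCount_eq]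
    rw [this, hp2, EhrAux.h, EhrAux.cl_univ]
    simp only [Finset.mem_univ, true_imp_iff]
    split_ifs with hd
    · rw [← mul_pow]; simp
    · simp
end

section
/- For every quasi-poset P on [n] there exists a unique polynomial ehr_P ∈ ℚ[X] such that for every integer k ≥ 0, ehr_P(k) equals the number of functions f : Fin n → Fin k with the property that i ≤_P j implies f(i) ≤ f(j). Moreover, if n ≥ 1, then ehr_P(X) = Σ_{i=1}^{n} #W_P(i) · H_i(X), where H_i(X) = X(X-1)⋯(X-i+1)/i! is the i-th Hilbert (binomial coefficient) polynomial. -/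
open Polynomial

/-- Number of surjective monotone maps `Fin n → Fin k` (the set `W_P(k)`). -/
noncomputable def WCount {n : ℕ} (le : Fin n → Fin n → Prop) (k : ℕ) : ℕ :=
  Nat.card {f : Fin n → Fin k //
    Function.Surjective f ∧ ∀ i j, le i j → f i ≤ f j}

/-- The `i`-th Hilbert polynomial `H_i(X) = X(X-1)⋯(X-i+1)/i!`. -/
noncomputable def Hilb (i : ℕ) : ℚ[X] :=
  Polynomial.C ((i.factorial : ℚ)⁻¹) * descPochhammer ℚ i

theorem ehr_fiber {n : ℕ} (le : Fin n → Fin n → Prop) (k : ℕ) (S : Finset (Fin k)) :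
    Nat.card {f : {f : Fin n → Fin k // ∀ i j, le i j → f i ≤ f j} //
      Finset.image f.1 Finset.univ = S} = WCount le S.card := by
  symm
  unfold WCount
  let e := S.orderEmbOfFin rfl
  have he : ∀ x, x ∈ S ↔ ∃ y, e y = x := by
    intro x
    have := S.range_orderEmbOfFin rfl
    rw [← Finset.mem_coe, ← this]
    rfl
  refine Nat.card_eq_of_bijective (fun g => ⟨⟨fun i => e (g.1 i), fun i j h => ?_⟩, ?_⟩) ⟨?_, ?_⟩
  · exact e.monotone (g.2.2 i j h)
  · ext x
    simp only [Finset.mem_image, Finset.mem_univ, true_and, he]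
    constructor
    · rintro ⟨i, hi⟩
      exact ⟨_, hi⟩
    · rintro ⟨y, rfl⟩
      obtain ⟨i, rfl⟩ := g.2.1 y
      exact ⟨i, rfl⟩
  · intro g g' h
    apply Subtype.ext
    funext i
    have h2 := congrFun (congrArg (fun f => f.1.1) h) i
    exact e.injective h2
  · rintro ⟨⟨f, hf⟩, hS⟩
    have h1 : ∀ i, ∃ y, e y = f i := by
      intro i
      rw [← he, ← hS]
      simp
    choose g hg using h1
    refine ⟨⟨g, ?_, ?_⟩, ?_⟩
    · intro y
      have : e y ∈ S := (he _).2 ⟨y, rfl⟩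
      replace this := (Finset.ext_iff.1 hS (e y)).2 this
      simp only [Finset.mem_image, Finset.mem_univ, true_and] at this
      obtain ⟨i, hi⟩ := this
      exact ⟨i, e.injective ((hg i).trans hi)⟩
    · intro i j h
      rw [← e.le_iff_le, hg, hg]
      exact hf i j h
    · apply Subtype.ext
      apply Subtype.ext
      funext i
      exact hg i

theorem ehr_W_zero {n : ℕ} (le : Fin n → Fin n → Prop) (i : ℕ) (h : n < i) :
    WCount le i = 0 := by
  unfold WCount
  have : IsEmpty {f : Fin n → Fin i // Function.Surjective f ∧ ∀ i j, le i j → f i ≤ f j} := by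
    refine ⟨fun f => ?_⟩
    have := Fintype.card_le_of_surjective _ f.2.1
    simp at this
    omega
  exact Nat.card_of_isEmpty

theorem ehr_count {n : ℕ} (le : Fin n → Fin n → Prop) (k : ℕ) :
    LCount le k = ∑ i ∈ Finset.range (n + 1), k.choose i * WCount le i := by
  have h1 : LCount le k = ∑ S : Finset (Fin k), WCount le S.card := by
    unfold LCount
    rw [← Nat.card_congr (Equiv.sigmaFiberEquiv
      (fun f : {f : Fin n → Fin k // ∀ i j, le i j → f i ≤ f j} =>
        Finset.image f.1 Finset.univ)), Nat.card_sigma]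
    exact Finset.sum_congr rfl fun S _ => ehr_fiber le k S
  have h2 := Finset.sum_powerset_apply_card (WCount le) (x := (Finset.univ : Finset (Fin k)))
  rw [Finset.powerset_univ] at h2
  rw [h1, h2]
  simp only [Finset.card_univ, Fintype.card_fin, smul_eq_mul]
  have h3 : ∀ m, (∀ i, m < i → k.choose i * WCount le i = 0) → m ≤ n + k →
      ∑ i ∈ Finset.range (m + 1), k.choose i * WCount le i =
      ∑ i ∈ Finset.range (n + k + 1), k.choose i * WCount le i := by
    intro m hm hmn
    apply Finset.sum_subset
    · intro i; simp; omega
    · intro i _ hi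
      apply hm
      simp at hi
      omega
  rw [h3 k (fun i hi => by rw [Nat.choose_eq_zero_of_lt hi, zero_mul]) (by omega),
    h3 n (fun i hi => by rw [ehr_W_zero le i hi, mul_zero]) (by omega)]

theorem ehr_Hilb_eval (i k : ℕ) : (Hilb i).eval (k : ℚ) = k.choose i := by
  unfold Hilb
  rw [eval_mul, eval_C, descPochhammer_eval_eq_descFactorial, Nat.descFactorial_eq_factorial_mul_choose]
  have : (i.factorial : ℚ) ≠ 0 := by exact_mod_cast i.factorial_ne_zero
  push_cast
  field_simp

theorem ehr_uniq (p q : ℚ[X]) (h : ∀ k : ℕ, p.eval (k : ℚ) = q.eval (k : ℚ)) : p = q := by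
  apply Polynomial.eq_of_infinite_eval_eq
  refine (Set.infinite_range_of_injective (Nat.cast_injective (R := ℚ))).mono ?_
  rintro _ ⟨k, rfl⟩
  exact h k

theorem ehr_eval {n : ℕ} (le : Fin n → Fin n → Prop) (k : ℕ) :
    (∑ i ∈ Finset.range (n + 1), (WCount le i : ℚ) • Hilb i).eval (k : ℚ) = LCount le k := by
  rw [ehr_count, eval_finsetSum]
  push_cast
  refine Finset.sum_congr rfl fun i _ => ?_
  rw [eval_smul, ehr_Hilb_eval, smul_eq_mul, mul_comm]

/-- Existence and uniqueness of the Ehrhart polynomial `ehr_P`, and its expansion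
in the Hilbert basis. -/
theorem ehr_exists_unique {n : ℕ} (le : Fin n → Fin n → Prop)
    (hrefl : ∀ i, le i i)
    (htrans : ∀ i j k, le i j → le j k → le i k) :
    (∃! p : ℚ[X], ∀ k : ℕ, p.eval (k : ℚ) = LCount le k) ∧
    (1 ≤ n → ∀ p : ℚ[X], (∀ k : ℕ, p.eval (k : ℚ) = LCount le k) →
      p = ∑ i ∈ Finset.Icc 1 n, (WCount le i : ℚ) • Hilb i) := by
  refine ⟨⟨_, ehr_eval le, fun q hq => ehr_uniq _ _ fun k => ?_⟩, fun hn p hp => ?_⟩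
  · rw [hq, ehr_eval]
  · have h : p = ∑ i ∈ Finset.range (n + 1), (WCount le i : ℚ) • Hilb i :=
      ehr_uniq _ _ fun k => by rw [hp, ehr_eval]
    rw [h]
    symm
    apply Finset.sum_subset
    · intro i hi
      rw [Finset.mem_Icc] at hi
      rw [Finset.mem_range]
      omega
    · intro i hi hi'
      have : i = 0 := by simp at hi hi'; omega
      subst this
      have : IsEmpty {f : Fin n → Fin 0 //
          Function.Surjective f ∧ ∀ i j, le i j → f i ≤ f j} :=
        ⟨fun f => (f.1 ⟨0, hn⟩).elim0⟩
      have h0 : WCount le 0 = 0 := Nat.card_of_isEmpty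
      rw [h0]
      simp
end

section
/- For every quasi-poset P on [n] and all integers k, l ≥ 0: #L_P(k+l) = Σ_{O ∈ top(P)} #L_{P|(Fin n ∖ O)}(k) · #L_{P|O}(l), where the sum ranges over all open sets O of P (including ∅ and Fin n). -/
/-- Number of monotone maps `B → Fin k` for the restriction of `le` to `B`. -/
noncomputable def LCountOn {n : ℕ} (le : Fin n → Fin n → Prop) (B : Set (Fin n))
    (k : ℕ) : ℕ :=
  Nat.card {f : B → Fin k // ∀ i j : B, le i.1 j.1 → f i ≤ f j}

open Classical in
/-- The fibre of the cut map over an open set. -/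
noncomputable def fibEquiv {n : ℕ} (le : Fin n → Fin n → Prop) (k l : ℕ) (O : Set (Fin n))
    (hO : ∀ i ∈ O, ∀ j, le i j → j ∈ O) :
    {x : {f : Fin n → Fin (k + l) // ∀ i j, le i j → f i ≤ f j} //
      {i | k ≤ (x.1 i).1} = O} ≃
    {f : (Oᶜ : Set (Fin n)) → Fin k // ∀ i j : (Oᶜ : Set (Fin n)), le i.1 j.1 → f i ≤ f j} ×
    {f : O → Fin l // ∀ i j : O, le i.1 j.1 → f i ≤ f j} where
  toFun x :=
    (⟨fun i => ⟨(x.1.1 i.1).1, by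
        by_contra h
        have h2 : i.1 ∈ {i | k ≤ (x.1.1 i).1} := not_lt.mp h
        exact i.2 (x.2.subset h2)⟩, fun i j h => by
        have := x.1.2 i.1 j.1 h
        simpa using this⟩,
     ⟨fun i => ⟨(x.1.1 i.1).1 - k, by
        have h : i.1 ∈ {i | k ≤ (x.1.1 i).1} := by rw [x.2]; exact i.2
        have h2 : k ≤ (x.1.1 i.1).1 := h
        have := (x.1.1 i.1).2
        omega⟩, fun i j h => by
        have h2 : (x.1.1 i.1).1 ≤ (x.1.1 j.1).1 := x.1.2 i.1 j.1 h
        rw [Fin.le_def]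
        exact Nat.sub_le_sub_right h2 k⟩)
  invFun p :=
    ⟨⟨fun i => if h : i ∈ O then Fin.natAdd k (p.2.1 ⟨i, h⟩) else Fin.castAdd l (p.1.1 ⟨i, h⟩), by
      intro i j hij
      by_cases hi : i ∈ O
      · have hj := hO i hi j hij
        have := p.2.2 ⟨i, hi⟩ ⟨j, hj⟩ hij
        simp only [hi, hj, dif_pos]
        rw [Fin.le_def] at this ⊢
        simpa using this
      · by_cases hj : j ∈ O
        · simp only [hi, hj, dif_pos, dif_neg, not_false_iff]
          rw [Fin.le_def]
          have := (p.1.1 ⟨i, hi⟩).2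
          simp only [Fin.val_castAdd, Fin.val_natAdd]
          omega
        · have := p.1.2 ⟨i, hi⟩ ⟨j, hj⟩ hij
          simp only [hi, hj, dif_neg, not_false_iff]
          rw [Fin.le_def] at this ⊢
          simpa using this⟩, by
      ext i
      by_cases hi : i ∈ O
      · simp [hi]
      · simp [hi]⟩
  left_inv x := by
    apply Subtype.ext
    apply Subtype.ext
    funext i
    apply Fin.ext
    by_cases hi : i ∈ O
    · have h : i ∈ {i | k ≤ (x.1.1 i).1} := by rw [x.2]; exact hi
      have h2 : k ≤ (x.1.1 i).1 := h
      simp [hi, h2]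
    · simp [hi]
  right_inv p := by
    apply Prod.ext
    · apply Subtype.ext
      funext i
      apply Fin.ext
      have hi : i.1 ∉ O := i.2
      simp [hi]
    · apply Subtype.ext
      funext i
      apply Fin.ext
      simp

open Classical in
/-- `#L_P(k+l) = Σ_{O ∈ top(P)} #L_{P|(Fin n ∖ O)}(k) · #L_{P|O}(l)`. -/
theorem LCount_add {n : ℕ} (le : Fin n → Fin n → Prop)
    (hrefl : ∀ i, le i i)
    (htrans : ∀ i j k, le i j → le j k → le i k)
    (k l : ℕ) :
    LCount le (k + l) =
      ∑ᶠ O : Set (Fin n),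
        if (∀ i ∈ O, ∀ j, le i j → j ∈ O) then
          LCountOn le Oᶜ k * LCountOn le O l
        else 0 := by
  rw [finsum_eq_sum_of_fintype]
  unfold LCount LCountOn
  rw [Nat.card_congr (Equiv.sigmaFiberEquiv
    (fun x : {f : Fin n → Fin (k + l) // ∀ i j, le i j → f i ≤ f j} =>
      {i | k ≤ (x.1 i).1})).symm, Nat.card_sigma]
  refine Finset.sum_congr rfl fun O _ => ?_
  split_ifs with hO
  · rw [Nat.card_congr (fibEquiv le k l O hO), Nat.card_prod]
  · have : IsEmpty {x : {f : Fin n → Fin (k + l) // ∀ i j, le i j → f i ≤ f j} //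
        {i | k ≤ (x.1 i).1} = O} := by
      refine ⟨fun x => hO ?_⟩
      obtain ⟨x, rfl⟩ := x
      intro i hi j hij
      exact le_trans (show k ≤ (x.1 i).1 from hi) (x.2 i j hij)
    exact Nat.card_of_isEmpty
end

section
/- For every quasi-poset P on [n] and all integers k, l ≥ 0: #L^str_P(k+l) = Σ_{O ∈ top(P)} #L^str_{P|(Fin n ∖ O)}(k) · #L^str_{P|O}(l), where the sum ranges over all open sets O of P (including ∅ and Fin n). -/
/-- Number of elements of `L^str(k)` for the restriction of `le` to `B`. -/
noncomputable def LstrCountOn {n : ℕ} (le : Fin n → Fin n → Prop) (B : Set (Fin n))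
    (k : ℕ) : ℕ :=
  Nat.card {f : B → Fin k //
    (∀ i j : B, le i.1 j.1 → f i ≤ f j) ∧
    (∀ i j : B, le i.1 j.1 → f i = f j → le j.1 i.1)}

open Classical in
noncomputable def fiberEquiv {n : ℕ} (le : Fin n → Fin n → Prop) (k l : ℕ) (O : Set (Fin n))
    (hO : ∀ i ∈ O, ∀ j, le i j → j ∈ O) :
    {x : {f : Fin n → Fin (k + l) //
      (∀ i j, le i j → f i ≤ f j) ∧ (∀ i j, le i j → f i = f j → le j i)} //
      {i | k ≤ (x.1 i : ℕ)} = O} ≃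
    {f : (Oᶜ : Set (Fin n)) → Fin k //
      (∀ i j : (Oᶜ : Set (Fin n)), le i.1 j.1 → f i ≤ f j) ∧
      (∀ i j : (Oᶜ : Set (Fin n)), le i.1 j.1 → f i = f j → le j.1 i.1)} ×
    {f : O → Fin l //
      (∀ i j : O, le i.1 j.1 → f i ≤ f j) ∧
      (∀ i j : O, le i.1 j.1 → f i = f j → le j.1 i.1)} where
  toFun x :=
    have hx : ∀ i, i ∈ O ↔ k ≤ (x.1.1 i : ℕ) := fun i => by
      conv_lhs => rw [← x.2]
      rfl
    (⟨fun i => ⟨x.1.1 i.1, not_le.1 fun h => i.2 ((hx i.1).2 h)⟩,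
      fun i j h => x.1.2.1 i.1 j.1 h,
      fun i j h e => x.1.2.2 i.1 j.1 h (Fin.ext (Fin.mk.inj e))⟩,
     ⟨fun i => ⟨(x.1.1 i.1 : ℕ) - k, by
        have := (hx i.1).1 i.2
        have := (x.1.1 i.1).2
        omega⟩,
      fun i j h => by
        have := x.1.2.1 i.1 j.1 h
        exact Nat.sub_le_sub_right this k,
      fun i j h e => by
        have h1 := (hx i.1).1 i.2
        have h2 := (hx j.1).1 j.2
        have e' := Fin.mk.inj e
        exact x.1.2.2 i.1 j.1 h (Fin.ext (by omega))⟩)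
  invFun y := ⟨⟨fun i => if h : i ∈ O then Fin.natAdd k (y.2.1 ⟨i, h⟩)
        else Fin.castAdd l (y.1.1 ⟨i, h⟩), by
      constructor
      · intro i j hij
        by_cases hi : i ∈ O
        · have hj := hO i hi j hij
          have := y.2.2.1 ⟨i, hi⟩ ⟨j, hj⟩ hij
          simp only [hi, hj, dif_pos, Fin.le_def, Fin.val_natAdd] at this ⊢
          omega
        · by_cases hj : j ∈ O
          · simp only [hi, hj, dif_pos, dif_neg, not_false_eq_true, Fin.le_def,
              Fin.val_natAdd, Fin.val_castAdd]
            have := (y.1.1 ⟨i, hi⟩).2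
            omega
          · have := y.1.2.1 ⟨i, hi⟩ ⟨j, hj⟩ hij
            simpa only [hi, hj, dif_neg, not_false_eq_true, Fin.le_def,
              Fin.val_castAdd] using this
      · intro i j hij e
        by_cases hi : i ∈ O
        · have hj := hO i hi j hij
          refine y.2.2.2 ⟨i, hi⟩ ⟨j, hj⟩ hij ?_
          simp only [hi, hj, dif_pos, Fin.ext_iff, Fin.val_natAdd] at e ⊢
          omega
        · by_cases hj : j ∈ O
          · simp only [hi, hj, dif_pos, dif_neg, not_false_eq_true, Fin.ext_iff,
              Fin.val_natAdd, Fin.val_castAdd] at e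
            have := (y.1.1 ⟨i, hi⟩).2
            omega
          · refine y.1.2.2 ⟨i, hi⟩ ⟨j, hj⟩ hij ?_
            simpa only [hi, hj, dif_neg, not_false_eq_true, Fin.ext_iff,
              Fin.val_castAdd] using e⟩, by
      ext i
      by_cases hi : i ∈ O
      · simp [hi]
      · simp [hi]⟩
  left_inv x := by
    have hx : ∀ i, i ∈ O ↔ k ≤ (x.1.1 i : ℕ) := fun i => by
      conv_lhs => rw [← x.2]
      rfl
    apply Subtype.ext
    apply Subtype.ext
    funext i
    by_cases hi : i ∈ O
    · have := (hx i).1 hi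
      simp only [hi, dif_pos, Fin.ext_iff, Fin.val_natAdd]
      omega
    · simp [hi, Fin.ext_iff]
  right_inv y := by
    apply Prod.ext
    · apply Subtype.ext
      funext i
      have hi : i.1 ∉ O := i.2
      simp [hi, Fin.ext_iff]
    · apply Subtype.ext
      funext i
      simp [Fin.ext_iff]

open Classical in
/-- `#L^str_P(k+l) = Σ_{O ∈ top(P)} #L^str_{P|(Fin n ∖ O)}(k) · #L^str_{P|O}(l)`. -/
theorem LstrCount_add {n : ℕ} (le : Fin n → Fin n → Prop)
    (hrefl : ∀ i, le i i)
    (htrans : ∀ i j k, le i j → le j k → le i k)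
    (k l : ℕ) :
    LstrCount le (k + l) =
      ∑ᶠ O : Set (Fin n),
        if (∀ i ∈ O, ∀ j, le i j → j ∈ O) then
          LstrCountOn le Oᶜ k * LstrCountOn le O l
        else 0 := by
  rw [finsum_eq_sum_of_fintype]
  unfold LstrCount
  rw [← Nat.card_congr (Equiv.sigmaFiberEquiv
    (fun x : {f : Fin n → Fin (k + l) //
      (∀ i j, le i j → f i ≤ f j) ∧ (∀ i j, le i j → f i = f j → le j i)} =>
      ({i | k ≤ (x.1 i : ℕ)} : Set (Fin n)))), Nat.card_sigma]
  refine Finset.sum_congr rfl fun O _ => ?_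
  split_ifs with hO
  · rw [LstrCountOn, LstrCountOn, ← Nat.card_prod]
    exact Nat.card_congr (fiberEquiv le k l O hO)
  · have : IsEmpty {x : {f : Fin n → Fin (k + l) //
      (∀ i j, le i j → f i ≤ f j) ∧ (∀ i j, le i j → f i = f j → le j i)} //
      {i | k ≤ (x.1 i : ℕ)} = O} := by
      refine ⟨fun x => hO ?_⟩
      rw [← x.2]
      intro i hi j hij
      exact le_trans (show k ≤ (x.1.1 i : ℕ) from hi) (x.1.2.1 i j hij)
    exact Nat.card_of_isEmpty
end

section
/- Recursive computation of ehr: Let P be a quasi-poset on [n] with n ≥ 1. Then for every integer m ≥ 1: ehr_P(m) = Σ_{k=0}^{m-1} Σ_{O ∈ top(P), O ≠ ∅} ehr_{P|(Fin n ∖ O)}(k), where the inner sum ranges over all nonempty open sets O of P. -/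
open Polynomial

theorem fiber_aux {n : ℕ} (le : Fin n → Fin n → Prop) (k : ℕ) (O : Set (Fin n))
    (hO : ∀ i ∈ O, ∀ j, le i j → j ∈ O) :
    LCountOn le Oᶜ k = Nat.card {x : {f : Fin n → Fin (k+1) // ∀ i j, le i j → f i ≤ f j} //
      {i | x.1 i = Fin.last k} = O} := by
  classical
  unfold LCountOn
  refine Nat.card_congr
    { toFun := fun g => ⟨⟨fun i => if h : i ∈ O then Fin.last k else (g.1 ⟨i, h⟩).castSucc, ?_⟩, ?_⟩
      invFun := fun x => ⟨fun i => (x.1.1 i.1).castPred ?_, ?_⟩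
      left_inv := ?_
      right_inv := ?_ }
  · intro i j hij
    by_cases hj : j ∈ O
    · simp only [hj, dif_pos]; exact Fin.le_last _
    · have hi : i ∉ O := fun hi => hj (hO i hi j hij)
      simp only [hj, hi, dif_neg, not_false_eq_true]
      exact Fin.castSucc_le_castSucc_iff.2 (g.2 ⟨i, hi⟩ ⟨j, hj⟩ hij)
  · ext i
    by_cases hi : i ∈ O
    · simp [hi]
    · simp [hi, (Fin.castSucc_lt_last _).ne]
  · intro h
    have h2 : i.1 ∈ {i | x.1.1 i = Fin.last k} := h
    rw [x.2] at h2
    exact i.2 h2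
  · intro i j hij
    exact Fin.castPred_le_castPred_iff.2 (x.1.2 _ _ hij)
  · intro g
    ext i
    have hi : i.1 ∉ O := i.2
    simp [hi]
  · intro x
    apply Subtype.ext
    apply Subtype.ext
    funext i
    by_cases hi : i ∈ O
    · have h2 := hi
      rw [← x.2] at h2
      simp only [hi, dif_pos]
      exact h2.symm
    · simp [hi]

open Classical in
theorem step_aux {n : ℕ} (le : Fin n → Fin n → Prop) (k : ℕ) :
    LCount le (k+1) = ∑ O : Set (Fin n),
      if (∀ i ∈ O, ∀ j, le i j → j ∈ O) then LCountOn le Oᶜ k else 0 := by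
  unfold LCount
  rw [← Nat.card_congr (Equiv.sigmaFiberEquiv
    (fun x : {f : Fin n → Fin (k+1) // ∀ i j, le i j → f i ≤ f j} => {i | x.1 i = Fin.last k})),
    Nat.card_sigma]
  refine Finset.sum_congr rfl fun O _ => ?_
  split_ifs with hO
  · exact (fiber_aux le k O hO).symm
  · rw [Nat.card_eq_zero]
    left
    refine ⟨fun x => hO ?_⟩
    intro i hi j hij
    rw [← x.2] at hi ⊢
    have h1 := x.1.2 i j hij
    have hi' : x.1.1 i = Fin.last k := hi
    rw [hi'] at h1
    exact Fin.last_le_iff.1 h1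

theorem univ_aux {n : ℕ} (le : Fin n → Fin n → Prop) (k : ℕ) :
    LCountOn le (∅ : Set (Fin n))ᶜ k = LCount le k := by
  unfold LCountOn LCount
  refine Nat.card_congr
    { toFun := fun g => ⟨fun i => g.1 ⟨i, by simp⟩, fun i j h => g.2 _ _ h⟩
      invFun := fun f => ⟨fun i => f.1 i.1, fun i j h => f.2 _ _ h⟩
      left_inv := fun g => rfl
      right_inv := fun g => rfl }

open Classical in
/-- Recursive computation of `ehr`: for `m ≥ 1`,
`ehr_P(m) = Σ_{k=0}^{m-1} Σ_{∅ ≠ O ∈ top(P)} ehr_{P|(Fin n ∖ O)}(k)`. -/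
theorem ehr_recursive {n : ℕ} (le : Fin n → Fin n → Prop)
    (hrefl : ∀ i, le i i)
    (htrans : ∀ i j k, le i j → le j k → le i k)
    (hn : 1 ≤ n)
    (p : ℚ[X]) (hp : ∀ k : ℕ, p.eval (k : ℚ) = LCount le k)
    (E : Set (Fin n) → ℚ[X])
    (hE : ∀ (B : Set (Fin n)) (k : ℕ), (E B).eval (k : ℚ) = LCountOn le B k) :
    ∀ m : ℕ, 1 ≤ m →
      p.eval (m : ℚ) =
        ∑ k ∈ Finset.range m, ∑ᶠ O : Set (Fin n),
          if O.Nonempty ∧ (∀ i ∈ O, ∀ j, le i j → j ∈ O) then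
            (E Oᶜ).eval (k : ℚ)
          else 0 := by
  have key : ∀ m : ℕ, p.eval (m : ℚ) =
        ∑ k ∈ Finset.range m, ∑ᶠ O : Set (Fin n),
          if O.Nonempty ∧ (∀ i ∈ O, ∀ j, le i j → j ∈ O) then
            (E Oᶜ).eval (k : ℚ)
          else 0 := by
    intro m
    induction m with
    | zero =>
      rw [hp, Finset.sum_range_zero, Nat.cast_eq_zero]
      unfold LCount
      rw [Nat.card_eq_zero]
      left
      exact ⟨fun f => (f.1 ⟨0, hn⟩).elim0⟩
    | succ k ih =>
      rw [Finset.sum_range_succ, ← ih, hp, hp, step_aux, finsum_eq_sum_of_fintype,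
        ← Finset.add_sum_erase _ _ (Finset.mem_univ (∅ : Set (Fin n))),
        ← Finset.add_sum_erase (a := (∅ : Set (Fin n))) _ _ (Finset.mem_univ (∅ : Set (Fin n)))]
      simp only [hE, univ_aux, Set.not_nonempty_empty, false_and, if_false, zero_add]
      push_cast
      congr 1
      · simp
      · refine Finset.sum_congr rfl fun O hO => ?_
        have hne : O.Nonempty := Set.nonempty_iff_ne_empty.2 (Finset.ne_of_mem_erase hO)
        simp only [hne, true_and]
  exact fun m _ => key m
end

section
/- Recursive computation of ehr^str: Let P be a quasi-poset on [n] with n ≥ 1. Then for every integer m ≥ 1: ehr^str_P(m) = Σ_{k=0}^{m-1} Σ_{O ∈ top(P), O ≠ ∅, P|O discrete} ehr^str_{P|(Fin n ∖ O)}(k), where the inner sum ranges over all nonempty open sets O of P whose restriction P|O is discrete. -/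
open Polynomial

lemma LstrCountOn_empty_compl {n : ℕ} (le : Fin n → Fin n → Prop) (m : ℕ) :
    LstrCountOn le (∅ᶜ : Set (Fin n)) m = LstrCount le m := by
  unfold LstrCountOn LstrCount
  refine Nat.card_congr
    { toFun := fun f => ⟨fun i => f.1 ⟨i, by simp⟩,
        fun i j h => f.2.1 _ _ h, fun i j h h' => f.2.2 _ _ h h'⟩
      invFun := fun f => ⟨fun i => f.1 i.1,
        fun i j h => f.2.1 _ _ h, fun i j h h' => f.2.2 _ _ h h'⟩
      left_inv := fun f => rfl
      right_inv := fun f => rfl }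

lemma fiber_card {n : ℕ} (le : Fin n → Fin n → Prop) (m : ℕ) (O : Set (Fin n))
    (h1 : ∀ i ∈ O, ∀ j, le i j → j ∈ O) (h2 : ∀ i ∈ O, ∀ j ∈ O, le i j → le j i) :
    Nat.card {f : {f : Fin n → Fin (m+1) //
      (∀ i j, le i j → f i ≤ f j) ∧ (∀ i j, le i j → f i = f j → le j i)} //
      {i | f.1 i = Fin.last m} = O} = LstrCountOn le Oᶜ m := by
  classical
  unfold LstrCountOn
  refine Nat.card_congr
    { toFun := fun f => ⟨fun i => (f.1.1 i.1).castPred (fun h => i.2 ((Set.ext_iff.1 f.2 i.1).1 h)),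
        fun i j h => ?_, fun i j h h' => ?_⟩
      invFun := fun g => ⟨⟨fun i => if h : i ∈ O then Fin.last m else (g.1 ⟨i, h⟩).castSucc,
        fun i j h => ?_, fun i j h h' => ?_⟩, ?_⟩
      left_inv := fun f => ?_
      right_inv := fun g => ?_ }
  · simpa using f.1.2.1 _ _ h
  · exact f.1.2.2 _ _ h (by simpa using h')
  · by_cases hi : i ∈ O
    · simp [hi, h1 i hi j h]
    · by_cases hj : j ∈ O
      · simp [hj, Fin.le_last]
      · simpa [hi, hj] using g.2.1 ⟨i, hi⟩ ⟨j, hj⟩ h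
  · by_cases hi : i ∈ O
    · exact h2 i hi j (h1 i hi j h) h
    · by_cases hj : j ∈ O
      · simp [hi, hj] at h'
      · exact g.2.2 ⟨i, hi⟩ ⟨j, hj⟩ h (by simpa [hi, hj] using h')
  · ext i
    by_cases hi : i ∈ O <;> simp [hi]
  · obtain ⟨f, rfl⟩ := f
    apply Subtype.ext
    apply Subtype.ext
    funext i
    by_cases hi : f.1 i = Fin.last m <;> simp [hi]
  · apply Subtype.ext
    funext i
    have := i.2
    rw [Set.mem_compl_iff] at this
    simp [this]

open Classical in
lemma LstrCount_succ {n : ℕ} (le : Fin n → Fin n → Prop) (m : ℕ) :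
    LstrCount le (m+1) = LstrCount le m + ∑ O : Set (Fin n),
          if O.Nonempty ∧ (∀ i ∈ O, ∀ j, le i j → j ∈ O) ∧
              (∀ i ∈ O, ∀ j ∈ O, le i j → le j i) then
            LstrCountOn le Oᶜ m else 0 := by
  conv_lhs => unfold LstrCount
  rw [← Nat.card_congr (Equiv.sigmaFiberEquiv (fun f : {f : Fin n → Fin (m+1) //
      (∀ i j, le i j → f i ≤ f j) ∧ (∀ i j, le i j → f i = f j → le j i)} =>
      {i | f.1 i = Fin.last m})), Nat.card_sigma]
  have h0 : LstrCount le m = ∑ O : Set (Fin n), if O = ∅ then LstrCountOn le Oᶜ m else 0 := by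
    rw [Finset.sum_ite_eq' Finset.univ (∅ : Set (Fin n))]
    simp only [Finset.mem_univ, if_true, LstrCountOn_empty_compl]
  rw [h0, ← Finset.sum_add_distrib]
  refine Finset.sum_congr rfl fun O _ => ?_
  by_cases hc : (∀ i ∈ O, ∀ j, le i j → j ∈ O) ∧ (∀ i ∈ O, ∀ j ∈ O, le i j → le j i)
  · rw [fiber_card le m O hc.1 hc.2]
    rcases O.eq_empty_or_nonempty with rfl | hO
    · simp
    · rw [if_neg hO.ne_empty, if_pos ⟨hO, hc⟩, zero_add]
  · have hO : O ≠ ∅ := by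
      rintro rfl
      exact hc (by simp)
    rw [if_neg hO, if_neg (fun h => hc h.2), zero_add, Nat.card_eq_zero]
    left
    refine ⟨fun ⟨f, hf⟩ => hc ?_⟩
    subst hf
    have h1 : ∀ i, f.1 i = Fin.last m → ∀ j, le i j → f.1 j = Fin.last m := fun i hi j h =>
      Fin.last_le_iff.1 (hi ▸ f.2.1 i j h)
    exact ⟨h1, fun i hi j hj h => f.2.2 i j h (Eq.trans hi (Eq.symm hj))⟩

open Classical in
/-- Recursive computation of `ehr^str`: for `m ≥ 1`,
`ehr^str_P(m) = Σ_{k=0}^{m-1} Σ_{∅ ≠ O ∈ top(P), P|O discrete} ehr^str_{P|(Fin n ∖ O)}(k)`. -/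
theorem ehr_str_recursive {n : ℕ} (le : Fin n → Fin n → Prop)
    (hrefl : ∀ i, le i i)
    (htrans : ∀ i j k, le i j → le j k → le i k)
    (hn : 1 ≤ n)
    (p : ℚ[X]) (hp : ∀ k : ℕ, p.eval (k : ℚ) = LstrCount le k)
    (E : Set (Fin n) → ℚ[X])
    (hE : ∀ (B : Set (Fin n)) (k : ℕ), (E B).eval (k : ℚ) = LstrCountOn le B k) :
    ∀ m : ℕ, 1 ≤ m →
      p.eval (m : ℚ) =
        ∑ k ∈ Finset.range m, ∑ᶠ O : Set (Fin n),
          if O.Nonempty ∧ (∀ i ∈ O, ∀ j, le i j → j ∈ O) ∧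
              (∀ i ∈ O, ∀ j ∈ O, le i j → le j i) then
            (E Oᶜ).eval (k : ℚ)
          else 0 := by
  intro m _
  have key : ∀ m : ℕ, (LstrCount le m : ℚ) = ∑ k ∈ Finset.range m, ∑ O : Set (Fin n),
          if O.Nonempty ∧ (∀ i ∈ O, ∀ j, le i j → j ∈ O) ∧
              (∀ i ∈ O, ∀ j ∈ O, le i j → le j i) then
            (LstrCountOn le Oᶜ k : ℚ) else 0 := by
    intro m
    induction m with
    | zero =>
      simp only [Finset.range_zero, Finset.sum_empty, Nat.cast_eq_zero]
      unfold LstrCount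
      rw [Nat.card_eq_zero]
      exact Or.inl ⟨fun f => (f.1 ⟨0, hn⟩).elim0⟩
    | succ m ih =>
      rw [LstrCount_succ, Finset.sum_range_succ, ← ih]
      push_cast
      rfl
  rw [hp, key]
  refine Finset.sum_congr rfl fun k _ => ?_
  rw [finsum_eq_sum_of_fintype]
  refine Finset.sum_congr rfl fun O _ => ?_
  rw [hE]
end

section
/- Characterization of the quasi-order by packed words: Let P be a quasi-poset on [n] and let i, j ∈ Fin n. The following assertions are equivalent: (1) i ≤_P j; (2) for all w ∈ L_P, w(i) ≤ w(j); (3) for all w ∈ L^str_P, w(i) ≤ w(j); (4) for all w ∈ W_P, w(i) ≤ w(j); (5) for all w ∈ W^str_P, w(i) ≤ w(j). -/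
open Classical in
theorem exists_word {n : ℕ} (le : Fin n → Fin n → Prop)
    (hrefl : ∀ i, le i i)
    (htrans : ∀ i j k, le i j → le j k → le i k)
    (i j : Fin n) (hn : ¬ le i j) :
    ∃ (k : ℕ) (w : Fin n → Fin k), Function.Surjective w ∧
      (∀ a b, le a b → w a ≤ w b) ∧ (∀ a b, le a b → w a = w b → le b a) ∧ ¬ w i ≤ w j := by
  let d : Fin n → Finset (Fin n) := fun a => Finset.univ.filter (fun c => le c a)
  let e : Fin n → ℕ := fun a => if le i a then n + 1 else 0
  let g : Fin n → ℕ := fun a => (d a).card + e a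
  have hd : ∀ a b, le a b → d a ⊆ d b := by
    intro a b h c hc
    simp only [d, Finset.mem_filter, Finset.mem_univ, true_and] at hc ⊢
    exact htrans _ _ _ hc h
  have he : ∀ a b, le a b → e a ≤ e b := by
    intro a b h
    by_cases h1 : le i a
    · simp [e, h1, htrans _ _ _ h1 h]
    · simp [e, h1]
  have hg : ∀ a b, le a b → g a ≤ g b := fun a b h =>
    add_le_add (Finset.card_le_card (hd a b h)) (he a b h)
  have hs : ∀ a b, le a b → g a = g b → le b a := by
    intro a b h hab
    have h1 := Finset.card_le_card (hd a b h)
    have h2 := he a b h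
    have h3 : (d b).card ≤ (d a).card := by simp only [g] at hab; omega
    have h4 := Finset.eq_of_subset_of_card_le (hd a b h) h3
    have h5 : b ∈ d b := by simp [d, hrefl]
    rw [← h4] at h5
    simpa [d] using h5
  have hij : g j < g i := by
    have h1 : (d j).card ≤ n := by simpa using Finset.card_le_univ (d j)
    have h2 : e j = 0 := by simp [e, hn]
    have h3 : e i = n + 1 := by simp [e, hrefl]
    simp only [g]
    omega
  let S := Finset.univ.image g
  have hm : ∀ a, g a ∈ S := fun a => Finset.mem_image_of_mem _ (Finset.mem_univ a)
  let o := (S.orderIsoOfFin rfl).symm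
  refine ⟨S.card, fun a => o ⟨g a, hm a⟩, ?_, ?_, ?_, ?_⟩
  · intro x
    obtain ⟨⟨y, hy⟩, rfl⟩ := o.surjective x
    obtain ⟨a, _, rfl⟩ := Finset.mem_image.1 hy
    exact ⟨a, rfl⟩
  · intro a b h
    exact o.monotone (hg a b h)
  · intro a b h hab
    exact hs a b h (congrArg Subtype.val (o.injective hab))
  · intro h
    have h' : g i ≤ g j := o.le_iff_le.1 h
    omega

/-- Characterization of the quasi-order by packed words: `i ≤_P j` is equivalent to
`w(i) ≤ w(j)` for all `w` in `L_P`, in `L^str_P`, in `W_P`, and in `W^str_P`. -/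
theorem le_iff_words {n : ℕ} (le : Fin n → Fin n → Prop)
    (hrefl : ∀ i, le i i)
    (htrans : ∀ i j k, le i j → le j k → le i k)
    (i j : Fin n) :
    (le i j ↔ ∀ (k : ℕ) (w : Fin n → Fin k),
      (∀ a b, le a b → w a ≤ w b) → w i ≤ w j) ∧
    (le i j ↔ ∀ (k : ℕ) (w : Fin n → Fin k),
      (∀ a b, le a b → w a ≤ w b) → (∀ a b, le a b → w a = w b → le b a) →
      w i ≤ w j) ∧
    (le i j ↔ ∀ (k : ℕ) (w : Fin n → Fin k), Function.Surjective w →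
      (∀ a b, le a b → w a ≤ w b) → w i ≤ w j) ∧
    (le i j ↔ ∀ (k : ℕ) (w : Fin n → Fin k), Function.Surjective w →
      (∀ a b, le a b → w a ≤ w b) → (∀ a b, le a b → w a = w b → le b a) →
      w i ≤ w j) := by
  have key : ¬ le i j → ∃ (k : ℕ) (w : Fin n → Fin k), Function.Surjective w ∧
      (∀ a b, le a b → w a ≤ w b) ∧ (∀ a b, le a b → w a = w b → le b a) ∧ ¬ w i ≤ w j :=
    exists_word le hrefl htrans i j
  refine ⟨⟨fun h k w hw => hw _ _ h, fun H => ?_⟩, ⟨fun h k w hw _ => hw _ _ h, fun H => ?_⟩,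
    ⟨fun h k w _ hw => hw _ _ h, fun H => ?_⟩, ⟨fun h k w _ hw _ => hw _ _ h, fun H => ?_⟩⟩
  all_goals
    by_contra hn
    obtain ⟨k, w, h1, h2, h3, h4⟩ := key hn
  · exact h4 (H k w h2)
  · exact h4 (H k w h2 h3)
  · exact h4 (H k w h1 h2)
  · exact h4 (H k w h1 h2 h3)
end

section
/- Let P be a quasi-poset on [n] and let w' be a packed word of length n. Then w' ∈ W_P if and only if there exists a linear extension w ∈ E_P with w' ≤ w (in the order on packed words). -/
/-- A packed word `w'` of length `n` belongs to `W_P` if and only if there is a linear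
extension `w ∈ E_P` of `P` with `w' ≤ w` in the order on packed words. -/
theorem mem_W_iff_le_linear_extension {n m : ℕ} (le : Fin n → Fin n → Prop)
    (hrefl : ∀ i, le i i)
    (htrans : ∀ i j k, le i j → le j k → le i k)
    (w' : Fin n → Fin m) (hw' : Function.Surjective w') :
    (∀ i j, le i j → w' i ≤ w' j) ↔
      ∃ (k : ℕ) (w : Fin n → Fin k), Function.Surjective w ∧
        (∀ i j, le i j → w i ≤ w j) ∧
        (∀ i j, le i j → w i = w j → le j i) ∧
        (∀ i j, w i = w j ↔ (le i j ∧ le j i)) ∧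
        (∀ i j, w' i < w' j → w i < w j) := by
  classical
  constructor
  · intro h
    let Q : Preorder (Fin n) :=
      { le := fun i j => le i j ∨ w' i < w' j
        lt := fun i j => (le i j ∨ w' i < w' j) ∧ ¬ (le j i ∨ w' j < w' i)
        lt_iff_le_not_ge := fun _ _ => Iff.rfl
        le_refl := fun i => Or.inl (hrefl i)
        le_trans := by
          intro a b c hab hbc
          rcases hab with hab | hab <;> rcases hbc with hbc | hbc
          · exact Or.inl (htrans _ _ _ hab hbc)
          · exact Or.inr (lt_of_le_of_lt (h _ _ hab) hbc)
          · exact Or.inr (lt_of_lt_of_le hab (h _ _ hbc))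
          · exact Or.inr (lt_trans hab hbc) }
    let A := @Antisymmetrization (Fin n) Q.le (@instIsPreorderLe _ Q)
    let PA : PartialOrder A := @instPartialOrderAntisymmetrization (Fin n) Q
    let q : Fin n → A := @toAntisymmetrization (Fin n) Q.le (@instIsPreorderLe _ Q)
    have hqs : Function.Surjective q := Quotient.mk_surjective
    have hqle : ∀ i j, PA.le (q i) (q j) ↔ (le i j ∨ w' i < w' j) := fun i j => Iff.rfl
    haveI : Finite A := Finite.of_surjective q hqs
    haveI : Fintype (LinearExtension A) := @Fintype.ofFinite (LinearExtension A) (inferInstanceAs (Finite A))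
    let e := Fintype.orderIsoFinOfCardEq (LinearExtension A) rfl
    let w : Fin n → Fin (Fintype.card (LinearExtension A)) :=
      fun i => e.symm (toLinearExtension (q i))
    have hmono : ∀ i j, (le i j ∨ w' i < w' j) → w i ≤ w j := fun i j hij =>
      e.symm.monotone (toLinearExtension.monotone ((hqle i j).2 hij))
    have heq : ∀ i j, w i = w j ↔ (le i j ∧ le j i) := by
      intro i j
      constructor
      · intro hij
        have h1 : q i = q j := e.symm.injective hij
        have h2 := (hqle i j).1 (le_of_eq h1)
        have h3 := (hqle j i).1 (le_of_eq h1.symm)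
        rcases h2 with h2 | h2 <;> rcases h3 with h3 | h3
        · exact ⟨h2, h3⟩
        · exact absurd (h _ _ h2) (not_le.2 h3)
        · exact absurd (h _ _ h3) (not_le.2 h2)
        · exact absurd h2 (lt_asymm h3)
      · rintro ⟨h1, h2⟩
        exact le_antisymm (hmono _ _ (Or.inl h1)) (hmono _ _ (Or.inl h2))
    refine ⟨_, w, ?_, fun i j hij => hmono _ _ (Or.inl hij),
      fun i j _ hij => ((heq i j).1 hij).2, heq, ?_⟩
    · intro x
      obtain ⟨i, hi⟩ := hqs (e x)
      refine ⟨i, ?_⟩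
      have : toLinearExtension (q i) = e x := hi
      simp only [w, this, OrderIso.symm_apply_apply]
    · intro i j hij
      refine lt_of_le_of_ne (hmono _ _ (Or.inr hij)) fun hw => ?_
      exact absurd (h _ _ ((heq i j).1 hw).2) (not_le.2 hij)
  · rintro ⟨k, w, -, hle, -, -, hlt⟩ i j hij
    by_contra hc
    exact absurd (hle _ _ hij) (not_le.2 (hlt _ _ (not_le.1 hc)))
end

section
/- Let P be a quasi-poset on [n]. An element w ∈ W_P is maximal in W_P for the order ≤ on packed words (i.e. for all w' ∈ W_P, w ≤ w' implies w = w') if and only if w ∈ E_P. -/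
theorem aux_le {n k k' : ℕ} (w : Fin n → Fin k) (w' : Fin n → Fin k')
    (hs : Function.Surjective w) (h : ∀ i j, w i < w j → w' i < w' j) :
    ∀ (m : ℕ) (i : Fin n), (w i : ℕ) = m → m ≤ (w' i : ℕ) := by
  intro m
  induction m with
  | zero => intro i _; exact Nat.zero_le _
  | succ m ih =>
    intro i hi
    obtain ⟨j, hj⟩ := hs ⟨m, by have := (w i).isLt; omega⟩
    have hj' : (w j : ℕ) = m := by rw [hj]
    have h1 := ih j hj'
    have h2 : w' j < w' i := h j i (by rw [Fin.lt_def]; omega)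
    rw [Fin.lt_def] at h2
    omega

/-- An element `w ∈ W_P` is maximal in `W_P` for the order on packed words if and only
if it is a linear extension of `P`.  Equality of packed words of possibly different
lengths is expressed by equality of the values as natural numbers. -/
theorem maximal_iff_linear_extension {n k : ℕ} (le : Fin n → Fin n → Prop)
    (hrefl : ∀ i, le i i)
    (htrans : ∀ i j k, le i j → le j k → le i k)
    (w : Fin n → Fin k)
    (hsurj : Function.Surjective w)
    (hmono : ∀ i j, le i j → w i ≤ w j) :
    (∀ (k' : ℕ) (w' : Fin n → Fin k'), Function.Surjective w' →
      (∀ i j, le i j → w' i ≤ w' j) →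
      (∀ i j, w i < w j → w' i < w' j) →
      ∀ i, (w i : ℕ) = (w' i : ℕ)) ↔
    ((∀ i j, le i j → w i = w j → le j i) ∧
     (∀ i j, w i = w j ↔ (le i j ∧ le j i))) := by
  have key : (∀ (k' : ℕ) (w' : Fin n → Fin k'), Function.Surjective w' →
      (∀ i j, le i j → w' i ≤ w' j) →
      (∀ i j, w i < w j → w' i < w' j) →
      ∀ i, (w i : ℕ) = (w' i : ℕ)) → ∀ a b, w a = w b → le a b := by
    classical
    intro H a b hab
    by_contra hn
    have hab' : (w a : ℕ) = w b := by rw [hab]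
    let g : Fin n → ℕ := fun i =>
      if (w a : ℕ) < w i ∨ ((w i : ℕ) = w a ∧ le a i) then (w i : ℕ) + 1 else w i
    have hg : ∀ i, g i =
      if (w a : ℕ) < w i ∨ ((w i : ℕ) = w a ∧ le a i) then (w i : ℕ) + 1 else w i :=
      fun i => rfl
    have hlt : ∀ i, g i < k + 1 := by
      intro i
      have := (w i).isLt
      rw [hg]; split_ifs <;> omega
    have hga : g a = w a + 1 := by
      rw [hg, if_pos (Or.inr ⟨rfl, hrefl a⟩)]
    have hgb : g b = w a := by
      rw [hg, if_neg, hab']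
      rintro (h | h)
      · omega
      · exact hn h.2
    have := H (k + 1) (fun i => ⟨g i, hlt i⟩) ?_ ?_ ?_ a
    · simp only [hga] at this
      omega
    · rintro ⟨v, hv⟩
      have ha := (w a).isLt
      rcases lt_trichotomy v (w a : ℕ) with h | h | h
      · obtain ⟨j, hj⟩ := hsurj ⟨v, by omega⟩
        have hj' : (w j : ℕ) = v := by rw [hj]
        refine ⟨j, Fin.ext ?_⟩
        change g j = v
        rw [hg, if_neg (by omega), hj']
      · exact ⟨b, Fin.ext (by change g b = v; omega)⟩
      · by_cases h2 : v = w a + 1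
        · exact ⟨a, Fin.ext (by change g a = v; omega)⟩
        · obtain ⟨j, hj⟩ := hsurj ⟨v - 1, by omega⟩
          have hj' : (w j : ℕ) = v - 1 := by rw [hj]
          refine ⟨j, Fin.ext ?_⟩
          change g j = v
          rw [hg, if_pos (by omega), hj']
          omega
    · intro i j hij
      have h1 : (w i : ℕ) ≤ w j := hmono i j hij
      have h2 : le a i → le a j := fun h => htrans _ _ _ h hij
      change g i ≤ g j
      rw [hg, hg]
      by_cases h3 : le a i
      · have h4 := h2 h3
        simp only [h3, h4, and_true]
        split_ifs <;> omega
      · simp only [h3, and_false, or_false]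
        split_ifs <;> omega
    · intro i j hij
      have h1 : (w i : ℕ) < w j := hij
      change g i < g j
      rw [hg, hg]
      split_ifs <;> omega
  constructor
  · intro H
    have K := key H
    exact ⟨fun i j _ h => K j i h.symm, fun i j =>
      ⟨fun h => ⟨K i j h, K j i h.symm⟩,
        fun h => le_antisymm (hmono _ _ h.1) (hmono _ _ h.2)⟩⟩
  · rintro ⟨-, H⟩ k' w' hs' hm' hlt i
    refine le_antisymm (aux_le w w' hsurj hlt _ i rfl) (aux_le w' w hs' ?_ _ i rfl)
    intro i j hij
    by_contra hc
    rcases lt_or_eq_of_le (not_lt.mp hc) with h | h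
    · exact absurd (hlt _ _ h) (not_lt.mpr hij.le)
    · exact absurd (hm' _ _ ((H j i).1 h).1) (not_le.mpr hij)
end

section
/- Let P be a quasi-poset on [n] and let w be a packed word of length n. Then w ∈ W_P if and only if there exists a unique P-compatible equivalence relation ~ on Fin n such that w ∈ W^str_{P/~}. (In other words, W_P is the disjoint union, over all ~ ◁ P, of the sets W^str_{P/~}.) -/
/-- The quotient quasi-order `≤_{P/~}`: the transitive (here reflexive-transitive)
closure of (`i ≤_P j` or `i ~ j`). -/
def quotLe {n : ℕ} (le r : Fin n → Fin n → Prop) : Fin n → Fin n → Prop :=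
  Relation.ReflTransGen (fun i j => le i j ∨ r i j)

/-- `~ ◁ P`: the equivalence relation `r` is `P`-compatible. -/
def Compat {n : ℕ} (le r : Fin n → Fin n → Prop) : Prop :=
  (∀ x y, r x y →
    Relation.ReflTransGen (fun a b => r a x ∧ r b x ∧ (le a b ∨ le b a)) x y) ∧
  (∀ i j, quotLe le r i j → quotLe le r j i → r i j)

/-- A packed word `w` belongs to `W_P` if and only if there is a unique
`P`-compatible equivalence relation `~` with `w ∈ W^str_{P/~}`. -/
theorem mem_W_iff_existsUnique_compat {n k : ℕ} (le : Fin n → Fin n → Prop)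
    (hrefl : ∀ i, le i i)
    (htrans : ∀ i j k, le i j → le j k → le i k)
    (w : Fin n → Fin k) (hw : Function.Surjective w) :
    (∀ i j, le i j → w i ≤ w j) ↔
      ∃! r : {r : Fin n → Fin n → Prop // Equivalence r ∧ Compat le r},
        (∀ i j, quotLe le r.1 i j → w i ≤ w j) ∧
        (∀ i j, quotLe le r.1 i j → w i = w j → quotLe le r.1 j i) := by
  have symS : ∀ (x y : Fin n), Relation.ReflTransGen (fun a b => w a = w b ∧ (le a b ∨ le b a)) x y →
      Relation.ReflTransGen (fun a b => w a = w b ∧ (le a b ∨ le b a)) y x := by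
    intro x y h
    induction h with
    | refl => exact .refl
    | tail _ h2 ih => exact .head ⟨h2.1.symm, h2.2.symm⟩ ih
  have eqS : ∀ (x y : Fin n), Relation.ReflTransGen (fun a b => w a = w b ∧ (le a b ∨ le b a)) x y →
      w x = w y := by
    intro x y h
    induction h with
    | refl => rfl
    | tail _ h2 ih => exact ih.trans h2.1
  constructor
  · intro hle
    have mono : ∀ i j, quotLe le
        (Relation.ReflTransGen (fun a b => w a = w b ∧ (le a b ∨ le b a))) i j → w i ≤ w j := by
      intro i j h
      induction h with
      | refl => exact le_rfl
      | tail _ h2 ih =>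
        rcases h2 with h2 | h2
        · exact ih.trans (hle _ _ h2)
        · exact ih.trans (eqS _ _ h2).le
    have key : ∀ i j, quotLe le
        (Relation.ReflTransGen (fun a b => w a = w b ∧ (le a b ∨ le b a))) i j → w i = w j →
        Relation.ReflTransGen (fun a b => w a = w b ∧ (le a b ∨ le b a)) i j := by
      intro i j h
      induction h with
      | refl => intro _; exact .refl
      | @tail b c h1 h2 ih =>
        intro e
        have l1 := mono _ _ h1
        rcases h2 with h2 | h2
        · have l2 := hle _ _ h2
          have e1 : w i = w b := le_antisymm l1 (e ▸ l2)
          exact (ih e1).tail ⟨e1.symm.trans e, Or.inl h2⟩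
        · exact (ih (e.trans (eqS _ _ h2).symm)).trans h2
    refine ⟨⟨Relation.ReflTransGen (fun a b => w a = w b ∧ (le a b ∨ le b a)),
      ⟨fun _ => .refl, fun h => symS _ _ h, fun h1 h2 => h1.trans h2⟩, ?_, ?_⟩, ⟨mono, ?_⟩, ?_⟩
    · intro x y h
      induction h with
      | refl => exact .refl
      | tail h1 h2 ih => exact ih.tail ⟨symS _ _ h1, symS _ _ (h1.tail h2), h2.2⟩
    · intro i j h1 h2
      exact key i j h1 (le_antisymm (mono _ _ h1) (mono _ _ h2))
    · intro i j h e
      exact .single (Or.inr (symS _ _ (key i j h e)))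
    · rintro ⟨r, hr, hc1, hc2⟩ ⟨m, s⟩
      apply Subtype.ext
      simp only at m s ⊢
      have rw' : ∀ x y, r x y → w x = w y := fun x y h =>
        le_antisymm (m _ _ (.single (Or.inr h))) (m _ _ (.single (Or.inr (hr.symm h))))
      have lr : ∀ x y, w x = w y → le x y → r x y := fun x y e h =>
        hc2 _ _ (.single (Or.inl h)) (s _ _ (.single (Or.inl h)) e)
      funext x y
      apply propext
      constructor
      · intro h
        refine Relation.ReflTransGen.mono ?_ _ _ (hc1 x y h)
        exact fun a b hab => ⟨(rw' _ _ hab.1).trans (rw' _ _ hab.2.1).symm, hab.2.2⟩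
      · intro h
        induction h with
        | refl => exact hr.refl _
        | tail _ h2 ih =>
          rcases h2 with ⟨e, h2 | h2⟩
          · exact hr.trans ih (lr _ _ e h2)
          · exact hr.trans ih (hr.symm (lr _ _ e.symm h2))
  · rintro ⟨r, ⟨m, _⟩, _⟩ i j h
    exact m i j (.single (Or.inl h))
end

section
/- For every surjection w : Fin n → Fin k (k ≥ 1), the relation defined by i ≤_P j iff (i = j or w(i) < w(j)) is a partial order on Fin n, and for every packed word w' of length n one has w' ∈ W^str_P if and only if w ≤ w' in the order on packed words. -/
/-- The partial order attached to a packed word `w`: `i ≤_P j` iff `i = j` or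
`w i < w j`. -/
def wordLE {n k : ℕ} (w : Fin n → Fin k) : Fin n → Fin n → Prop :=
  fun i j => i = j ∨ w i < w j

/-- For a surjection `w : Fin n → Fin k` (`k ≥ 1`), the relation `wordLE w` is a
partial order `P` on `Fin n`, and a packed word `w'` of length `n` belongs to
`W^str_P` if and only if `w ≤ w'` in the order on packed words. -/
theorem wordLE_partialOrder_and_Wstr {n k : ℕ} (hk : 1 ≤ k)
    (w : Fin n → Fin k) (hw : Function.Surjective w) :
    (∀ i, wordLE w i i) ∧
    (∀ i j l, wordLE w i j → wordLE w j l → wordLE w i l) ∧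
    (∀ i j, wordLE w i j → wordLE w j i → i = j) ∧
    (∀ (m : ℕ) (w' : Fin n → Fin m), Function.Surjective w' →
      (((∀ i j, wordLE w i j → w' i ≤ w' j) ∧
        (∀ i j, wordLE w i j → w' i = w' j → wordLE w j i)) ↔
       (∀ i j, w i < w j → w' i < w' j))) := by
  refine ⟨fun i => Or.inl rfl, ?_, ?_, ?_⟩
  · rintro i j l (rfl | h) (rfl | h')
    · exact Or.inl rfl
    · exact Or.inr h'
    · exact Or.inr h
    · exact Or.inr (h.trans h')
  · rintro i j (rfl | h) (h' | h')
    · rfl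
    · rfl
    · exact h'.symm
    · exact absurd h' h.asymm
  · intro m w' _
    constructor
    · rintro ⟨h1, h2⟩ i j hij
      refine lt_of_le_of_ne (h1 i j (Or.inr hij)) fun he => ?_
      rcases h2 i j (Or.inr hij) he with h | h
      · subst h
        exact lt_irrefl _ hij
      · exact hij.asymm h
    · intro h
      refine ⟨?_, ?_⟩
      · rintro i j (rfl | hij)
        · exact le_rfl
        · exact (h i j hij).le
      · rintro i j (rfl | hij) he
        · exact Or.inl rfl
        · exact absurd he (h i j hij).ne
end

section
/- Let A and B be bialgebras over a field K in cointeraction via ρ : A → A ⊗ B, and assume A is a Hopf algebra with antipode S. Then S is a morphism of B-comodules: ρ ∘ S = (S ⊗ id_B) ∘ ρ. -/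
open TensorProduct

/-- If `A` and `B` are bialgebras in cointeraction via `ρ : A → A ⊗ B` and `A` is a
Hopf algebra with antipode `S`, then `S` is a morphism of `B`-comodules:
`ρ ∘ S = (S ⊗ id) ∘ ρ`. -/
theorem antipode_comodule_morphism
    {K : Type*} [Field K]
    {A : Type*} [Semiring A] [HopfAlgebra K A]
    {B : Type*} [Semiring B] [Bialgebra K B]
    (ρ : A →ₐ[K] A ⊗[K] B)
    -- coassociativity of the coaction: `(ρ ⊗ id) ∘ ρ = (id ⊗ Δ_B) ∘ ρ`
    (hcoassoc :
      (TensorProduct.assoc K A B B).toLinearMap ∘ₗ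
          (TensorProduct.map ρ.toLinearMap LinearMap.id) ∘ₗ ρ.toLinearMap =
        (TensorProduct.map LinearMap.id Coalgebra.comul) ∘ₗ ρ.toLinearMap)
    -- counitality of the coaction: `(id ⊗ ε_B) ∘ ρ = id`
    (hcounit :
      (TensorProduct.rid K A).toLinearMap ∘ₗ
          (TensorProduct.map LinearMap.id Coalgebra.counit) ∘ₗ ρ.toLinearMap =
        LinearMap.id)
    -- compatibility with `Δ_A`: `(Δ_A ⊗ id_B) ∘ ρ = m³₂₄ ∘ (ρ ⊗ ρ) ∘ Δ_A`
    (hcomp :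
      (TensorProduct.map Coalgebra.comul LinearMap.id) ∘ₗ ρ.toLinearMap =
        (TensorProduct.map LinearMap.id (LinearMap.mul' K B)) ∘ₗ
          (TensorProduct.tensorTensorTensorComm K A B A B).toLinearMap ∘ₗ
          (TensorProduct.map ρ.toLinearMap ρ.toLinearMap) ∘ₗ Coalgebra.comul)
    -- compatibility with `ε_A`: `(ε_A ⊗ id_B)(ρ a) = ε_A(a) 1_B`
    (hcounitA :
      (TensorProduct.lid K B).toLinearMap ∘ₗ
          (TensorProduct.map Coalgebra.counit LinearMap.id) ∘ₗ ρ.toLinearMap =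
        (Algebra.linearMap K B) ∘ₗ Coalgebra.counit) :
    ρ.toLinearMap ∘ₗ (HopfAlgebra.antipode (R := K) (A := A)) =
      (TensorProduct.map (HopfAlgebra.antipode (R := K) (A := A)) LinearMap.id) ∘ₗ
        ρ.toLinearMap := by
  have key : ∀ x : (A ⊗[K] B) ⊗[K] (A ⊗[K] B),
      LinearMap.mul' K (A ⊗[K] B) (TensorProduct.map
        (TensorProduct.map (HopfAlgebra.antipode K (A := A)) LinearMap.id) LinearMap.id x) =
      TensorProduct.map (LinearMap.mul' K A ∘ₗ
          (HopfAlgebra.antipode K (A := A)).rTensor A) LinearMap.id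
        (TensorProduct.map LinearMap.id (LinearMap.mul' K B)
          (TensorProduct.tensorTensorTensorComm K A B A B x)) := by
    intro x
    refine LinearMap.congr_fun (f := LinearMap.mul' K (A ⊗[K] B) ∘ₗ (TensorProduct.map
        (TensorProduct.map (HopfAlgebra.antipode K (A := A)) LinearMap.id) LinearMap.id))
      (g := TensorProduct.map (LinearMap.mul' K A ∘ₗ
          (HopfAlgebra.antipode K (A := A)).rTensor A) LinearMap.id ∘ₗ
        (TensorProduct.map LinearMap.id (LinearMap.mul' K B)) ∘ₗ
          (TensorProduct.tensorTensorTensorComm K A B A B).toLinearMap) ?_ x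
    ext a b c d
    simp
  have hl : WithConv.toConv ((TensorProduct.map (HopfAlgebra.antipode K (A := A))
      LinearMap.id) ∘ₗ ρ.toLinearMap) * WithConv.toConv ρ.toLinearMap = 1 := by
    ext a
    have h1 := LinearMap.congr_fun hcomp a
    have h2 := LinearMap.congr_fun hcounitA a
    simp only [LinearMap.comp_apply, LinearEquiv.coe_coe] at h1 h2
    have h3 : ∀ y : A ⊗[K] A, TensorProduct.map ((TensorProduct.map
        (HopfAlgebra.antipode K (A := A)) (LinearMap.id (M := B))) ∘ₗ ρ.toLinearMap)
          ρ.toLinearMap y = TensorProduct.map (TensorProduct.map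
        (HopfAlgebra.antipode K (A := A)) LinearMap.id) LinearMap.id
          (TensorProduct.map ρ.toLinearMap ρ.toLinearMap y) := by
      intro y
      rw [← LinearMap.comp_apply, ← TensorProduct.map_comp, LinearMap.id_comp]
    have h4 : ∀ z : A ⊗[K] B, TensorProduct.map (LinearMap.mul' K A ∘ₗ
          (HopfAlgebra.antipode K (A := A)).rTensor A) LinearMap.id
          (TensorProduct.map (Coalgebra.comul (R := K)) LinearMap.id z) =
        (1 : A) ⊗ₜ[K] (TensorProduct.lid K B
          (TensorProduct.map (Coalgebra.counit (R := K)) LinearMap.id z)) := by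
      intro z
      induction z with
      | zero => simp
      | add x y hx hy => simp only [map_add, hx, hy, TensorProduct.tmul_add]
      | tmul x y =>
        simp [HopfAlgebra.mul_antipode_rTensor_comul_apply, Algebra.algebraMap_eq_smul_one,
          TensorProduct.smul_tmul]
    rw [LinearMap.convMul_apply, LinearMap.convOne_apply]
    simp only [WithConv.ofConv_toConv]
    rw [h3, key, ← h1, h4, h2]
    simp [Algebra.algebraMap_eq_smul_one, Algebra.TensorProduct.one_def]
  have hr : WithConv.toConv ρ.toLinearMap * WithConv.toConv (ρ.toLinearMap ∘ₗ
      (HopfAlgebra.antipode K (A := A))) = 1 := by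
    ext a
    have h3 : ∀ y : A ⊗[K] A, LinearMap.mul' K (A ⊗[K] B) (TensorProduct.map ρ.toLinearMap
        (ρ.toLinearMap ∘ₗ (HopfAlgebra.antipode K (A := A))) y) =
        ρ (LinearMap.mul' K A ((HopfAlgebra.antipode K (A := A)).lTensor A y)) := by
      intro y
      induction y with
      | zero => simp
      | add x y hx hy => simp only [map_add, hx, hy]
      | tmul x y => simp
    rw [LinearMap.convMul_apply, LinearMap.convOne_apply]
    simp only [WithConv.ofConv_toConv]
    rw [h3, HopfAlgebra.mul_antipode_lTensor_comul_apply, AlgHom.commutes]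
  exact (WithConv.toConv_injective (left_inv_eq_right_inv hl hr)).symm
end

section
/- Let P be a quasi-poset on [n]. If r ◁ P and r' ◁ P/r, then: r' ◁ P, r ◁ P|r', and the following equalities of preorders on Fin n hold: (P/r)/r' = P/r', (P/r)|r' = (P|r')/r, and (P|r')|r = P|r. Moreover, the map (r, r') ↦ (r', r) is a bijection from the set {(r, r') : r ◁ P and r' ◁ P/r} onto the set {(s, s') : s ◁ P and s' ◁ P|s}. -/
/-- The restricted quasi-order `≤_{P|~}`: `i ≤_P j` and `i ~ j`. -/
def restLe {n : ℕ} (le r : Fin n → Fin n → Prop) : Fin n → Fin n → Prop :=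
  fun i j => le i j ∧ r i j

lemma cx_mono {α : Type*} {p q : α → α → Prop} (h : ∀ a b, p a b → q a b) {a b : α}
    (hab : Relation.ReflTransGen p a b) : Relation.ReflTransGen q a b := by
  induction hab with
  | refl => exact Relation.ReflTransGen.refl
  | tail _ h1 ih => exact ih.tail (h _ _ h1)

open Relation in
lemma cx_convex {n : ℕ} {le s t : Fin n → Fin n → Prop} (hs : Equivalence s)
    (hts : ∀ a b, t a b → s a b)
    (ha : ∀ i j, quotLe le s i j → quotLe le s j i → s i j) {i j : Fin n}
    (h : quotLe le t i j) : quotLe le s j i → quotLe (restLe le s) t i j := by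
  have mono : ∀ {a b}, quotLe le t a b → quotLe le s a b := fun h =>
    cx_mono (fun a b h => h.imp id (hts a b)) h
  induction h with
  | refl => intro _; exact ReflTransGen.refl
  | @tail b c hib hbc ih =>
    intro hci
    have h1 : quotLe le s b c := mono (ReflTransGen.single hbc)
    have hbi : quotLe le s b i := ReflTransGen.trans h1 hci
    have hcb : quotLe le s c b := ReflTransGen.trans hci (mono hib)
    have hs' : s b c := ha _ _ h1 hcb
    refine ReflTransGen.tail (ih hbi) ?_
    exact hbc.imp (fun h => ⟨h, hs'⟩) id

open Relation in
lemma cx_quot {n : ℕ} {le r s : Fin n → Fin n → Prop} 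
    (hrs : ∀ a b, r a b → s a b) : quotLe (quotLe le r) s = quotLe le s := by
  funext i j
  apply propext
  constructor
  · intro h
    induction h with
    | refl => exact ReflTransGen.refl
    | tail _ h ih =>
      refine ReflTransGen.trans ih ?_
      rcases h with h | h
      · exact cx_mono (fun a b h => h.imp id (hrs a b)) h
      · exact ReflTransGen.single (Or.inr h)
  · intro h
    exact cx_mono (fun a b h => h.imp (fun h => ReflTransGen.single (Or.inl h)) id) h

open Relation in
lemma cx_fwd {n : ℕ} (le : Fin n → Fin n → Prop) (r r' : Fin n → Fin n → Prop)
    (er : Equivalence r) (cr : Compat le r) (er' : Equivalence r')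
    (cr' : Compat (quotLe le r) r') :
        Compat le r' ∧ Compat (restLe le r') r ∧
        quotLe (quotLe le r) r' = quotLe le r' ∧
        restLe (quotLe le r) r' = quotLe (restLe le r') r ∧
        restLe (restLe le r') r = restLe le r := by
  have sub : ∀ a b, r a b → r' a b := fun a b h => cr'.2 a b
    (ReflTransGen.single (Or.inl (ReflTransGen.single (Or.inr h))))
    (ReflTransGen.single (Or.inl (ReflTransGen.single (Or.inr (er.symm h)))))
  have hq := cx_quot (le := le) sub
  have anti : ∀ i j, quotLe le r' i j → quotLe le r' j i → r' i j := by
    rw [← hq]; exact cr'.2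
  have conv : ∀ {a b}, quotLe le r a b → r' a b → quotLe (restLe le r') r a b :=
    fun h h' => cx_convex er' sub anti h (ReflTransGen.single (Or.inr (er'.symm h')))
  refine ⟨⟨?_, anti⟩, ⟨?_, ?_⟩, hq, ?_, ?_⟩
  · intro x y hxy
    have sym : Symmetric (ReflTransGen
        (fun a b => r' a x ∧ r' b x ∧ (le a b ∨ le b a))) := by
      have : Std.Symm (fun a b => r' a x ∧ r' b x ∧ (le a b ∨ le b a)) :=
        ⟨fun a b h => ⟨h.2.1, h.1, h.2.2.symm⟩⟩
      intro a b h
      exact Std.Symm.symm _ _ h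
    have key : ∀ a b, r' a x → r' b x → quotLe le r a b → ReflTransGen
        (fun a b => r' a x ∧ r' b x ∧ (le a b ∨ le b a)) a b := by
      intro a b hax hbx hab
      have h := conv hab (er'.trans hax (er'.symm hbx))
      clear hab hbx
      have : r' b x ∧ ReflTransGen
        (fun a b => r' a x ∧ r' b x ∧ (le a b ∨ le b a)) a b := by
        induction h with
        | refl => exact ⟨hax, ReflTransGen.refl⟩
        | @tail c d _ h ih =>
          obtain ⟨hc, ih⟩ := ih
          rcases h with h | h
          · have hd := er'.trans (er'.symm h.2) hc
            exact ⟨hd, ih.tail ⟨hc, hd, Or.inl h.1⟩⟩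
          · refine ⟨er'.trans (er'.symm (sub _ _ h)) hc, ih.trans ?_⟩
            exact cx_mono (fun u v huv => ⟨er'.trans (sub _ _ huv.1) hc,
              er'.trans (sub _ _ huv.2.1) hc, huv.2.2⟩) (cr.1 _ _ h)
      exact this.2
    have h := cr'.1 x y hxy
    clear hxy
    induction h with
    | refl => exact ReflTransGen.refl
    | tail _ h ih =>
      refine ih.trans ?_
      rcases h with ⟨h1, h2, h | h⟩
      · exact key _ _ h1 h2 h
      · exact sym (key _ _ h2 h1 h)
  · intro x y hxy
    refine cx_mono ?_ (cr.1 x y hxy)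
    rintro a b ⟨h1, h2, h⟩
    have hab := sub _ _ (er.trans h1 (er.symm h2))
    exact ⟨h1, h2, h.imp (fun h => ⟨h, hab⟩) (fun h => ⟨h, er'.symm hab⟩)⟩
  · intro i j h1 h2
    exact cr.2 i j (cx_mono (fun a b h => h.imp (fun h => h.1) id) h1)
      (cx_mono (fun a b h => h.imp (fun h => h.1) id) h2)
  · funext i j
    apply propext
    constructor
    · rintro ⟨h1, h2⟩
      exact conv h1 h2
    · intro h
      refine ⟨cx_mono (fun a b h => h.imp (fun h => h.1) id) h, ?_⟩
      induction h with
      | refl => exact er'.refl _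
      | tail _ h ih => exact er'.trans ih (h.elim (fun h => h.2) (sub _ _))
  · funext i j
    exact propext ⟨fun h => ⟨h.1.1, h.2⟩, fun h => ⟨⟨h.1, sub _ _ h.2⟩, h.2⟩⟩

open Relation in
lemma cx_bwd {n : ℕ} (le : Fin n → Fin n → Prop) (s t : Fin n → Fin n → Prop)
    (es : Equivalence s) (cs : Compat le s)
    (ct : Compat (restLe le s) t) :
    Compat le t ∧ Compat (quotLe le t) s := by
  have sub : ∀ a b, t a b → s a b := by
    intro a b h
    replace h := ct.1 a b h
    induction h with
    | refl => exact es.refl _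
    | tail _ h ih =>
      exact es.trans ih (h.2.2.elim (fun h => h.2) (fun h => es.symm h.2))
  have mono : ∀ {a b}, quotLe le t a b → quotLe le s a b := fun h =>
    cx_mono (fun a b h => h.imp id (sub a b)) h
  refine ⟨⟨?_, ?_⟩, ?_, ?_⟩
  · intro x y h
    exact cx_mono (fun a b h => ⟨h.1, h.2.1, h.2.2.imp (fun h => h.1)
      (fun h => h.1)⟩) (ct.1 x y h)
  · intro i j h1 h2
    exact ct.2 i j (cx_convex es sub cs.2 h1 (mono h2)) (cx_convex es sub cs.2 h2 (mono h1))
  · intro x y h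
    exact cx_mono (fun a b h => ⟨h.1, h.2.1, h.2.2.imp
      (fun h => ReflTransGen.single (Or.inl h))
      (fun h => ReflTransGen.single (Or.inl h))⟩) (cs.1 x y h)
  · rw [cx_quot sub]; exact cs.2

/-- If `r ◁ P` and `r' ◁ P/r`, then `r' ◁ P`, `r ◁ P|r'`, with
`(P/r)/r' = P/r'`, `(P/r)|r' = (P|r')/r` and `(P|r')|r = P|r`; moreover
`(r, r') ↦ (r', r)` is a bijection between the corresponding sets of pairs. -/
theorem compat_exchange {n : ℕ} (le : Fin n → Fin n → Prop)
    (hrefl : ∀ i, le i i)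
    (htrans : ∀ i j k, le i j → le j k → le i k) :
    (∀ r r' : Fin n → Fin n → Prop,
      Equivalence r → Compat le r → Equivalence r' → Compat (quotLe le r) r' →
        Compat le r' ∧ Compat (restLe le r') r ∧
        quotLe (quotLe le r) r' = quotLe le r' ∧
        restLe (quotLe le r) r' = quotLe (restLe le r') r ∧
        restLe (restLe le r') r = restLe le r) ∧
    Set.BijOn
      (fun p : (Fin n → Fin n → Prop) × (Fin n → Fin n → Prop) => (p.2, p.1))
      {p | Equivalence p.1 ∧ Compat le p.1 ∧ Equivalence p.2 ∧
        Compat (quotLe le p.1) p.2}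
      {p | Equivalence p.1 ∧ Compat le p.1 ∧ Equivalence p.2 ∧
        Compat (restLe le p.1) p.2} := by
  refine ⟨cx_fwd le, ?_, ?_, ?_⟩
  · rintro ⟨r, r'⟩ ⟨h1, h2, h3, h4⟩
    obtain ⟨a, b, _⟩ := cx_fwd le r r' h1 h2 h3 h4
    exact ⟨h3, a, h1, b⟩
  · rintro ⟨a, b⟩ _ ⟨c, d⟩ _ h
    simp only [Prod.mk.injEq] at h ⊢
    exact ⟨h.2, h.1⟩
  · rintro ⟨s, t⟩ ⟨h1, h2, h3, h4⟩
    obtain ⟨a, b⟩ := cx_bwd le s t h1 h2 h4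
    exact ⟨(t, s), ⟨h3, a, h1, b⟩, rfl⟩
end

section
/- Let A and B be bialgebras over a field K in cointeraction via ρ : A → A ⊗ B. For algebra morphisms (characters) φ, φ₁, φ₂ : A → K and λ, λ₁, λ₂ : B → K, define φ ← λ = (φ ⊗ λ) ∘ ρ : A → K, the convolution φ₁ ⋆ φ₂ = (φ₁ ⊗ φ₂) ∘ Δ_A, and λ₁ * λ₂ = (λ₁ ⊗ λ₂) ∘ Δ_B. Then φ ← λ is again an algebra morphism from A to K, and the following identities hold: (φ ← λ₁) ← λ₂ = φ ← (λ₁ * λ₂), φ ← (η_K ∘ ε_B) = φ, and (φ₁ ⋆ φ₂) ← λ = (φ₁ ← λ) ⋆ (φ₂ ← λ). (That is, the monoid of characters of B acts on the monoid of characters of A by monoid endomorphisms.) -/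
open TensorProduct

variable {K : Type*} [Field K]

/-- The action `φ ← λ = (φ ⊗ λ) ∘ ρ` of a character `λ` of `B` on a character `φ`
of `A`, at the level of linear maps. -/
noncomputable def charAct {A B : Type*} [Semiring A] [Semiring B]
    [Algebra K A] [Algebra K B]
    (ρ : A →ₗ[K] A ⊗[K] B) (φ : A →ₗ[K] K) (lam : B →ₗ[K] K) : A →ₗ[K] K :=
  LinearMap.mul' K K ∘ₗ TensorProduct.map φ lam ∘ₗ ρ

/-- The convolution product of two linear forms on a bialgebra. -/
noncomputable def conv {C : Type*} [Semiring C] [Bialgebra K C]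
    (f g : C →ₗ[K] K) : C →ₗ[K] K :=
  LinearMap.mul' K K ∘ₗ TensorProduct.map f g ∘ₗ Coalgebra.comul

/-- If `A` and `B` are bialgebras in cointeraction via `ρ`, then the monoid of
characters of `B` acts on the monoid of characters of `A` by monoid endomorphisms:
`φ ← λ` is again a character, `(φ ← λ₁) ← λ₂ = φ ← (λ₁ * λ₂)`,
`φ ← (η_K ∘ ε_B) = φ`, and `(φ₁ ⋆ φ₂) ← λ = (φ₁ ← λ) ⋆ (φ₂ ← λ)`. -/
theorem characters_monoid_action
    {A : Type*} [Semiring A] [Bialgebra K A]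
    {B : Type*} [Semiring B] [Bialgebra K B]
    (ρ : A →ₐ[K] A ⊗[K] B)
    -- coassociativity of the coaction: `(ρ ⊗ id) ∘ ρ = (id ⊗ Δ_B) ∘ ρ`
    (hcoassoc :
      (TensorProduct.assoc K A B B).toLinearMap ∘ₗ
          (TensorProduct.map ρ.toLinearMap LinearMap.id) ∘ₗ ρ.toLinearMap =
        (TensorProduct.map LinearMap.id Coalgebra.comul) ∘ₗ ρ.toLinearMap)
    -- counitality of the coaction: `(id ⊗ ε_B) ∘ ρ = id`
    (hcounit :
      (TensorProduct.rid K A).toLinearMap ∘ₗ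
          (TensorProduct.map LinearMap.id Coalgebra.counit) ∘ₗ ρ.toLinearMap =
        LinearMap.id)
    -- compatibility with `Δ_A`: `(Δ_A ⊗ id_B) ∘ ρ = m³₂₄ ∘ (ρ ⊗ ρ) ∘ Δ_A`
    (hcomp :
      (TensorProduct.map Coalgebra.comul LinearMap.id) ∘ₗ ρ.toLinearMap =
        (TensorProduct.map LinearMap.id (LinearMap.mul' K B)) ∘ₗ
          (TensorProduct.tensorTensorTensorComm K A B A B).toLinearMap ∘ₗ
          (TensorProduct.map ρ.toLinearMap ρ.toLinearMap) ∘ₗ Coalgebra.comul)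
    -- compatibility with `ε_A`: `(ε_A ⊗ id_B)(ρ a) = ε_A(a) 1_B`
    (hcounitA :
      (TensorProduct.lid K B).toLinearMap ∘ₗ
          (TensorProduct.map Coalgebra.counit LinearMap.id) ∘ₗ ρ.toLinearMap =
        (Algebra.linearMap K B) ∘ₗ Coalgebra.counit) :
    -- `φ ← λ` is again an algebra morphism from `A` to `K`
    (∀ (φ : A →ₐ[K] K) (lam : B →ₐ[K] K),
      (∀ a b : A,
        charAct ρ.toLinearMap φ.toLinearMap lam.toLinearMap (a * b) =
          charAct ρ.toLinearMap φ.toLinearMap lam.toLinearMap a *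
          charAct ρ.toLinearMap φ.toLinearMap lam.toLinearMap b) ∧
      charAct ρ.toLinearMap φ.toLinearMap lam.toLinearMap 1 = 1) ∧
    -- `(φ ← λ₁) ← λ₂ = φ ← (λ₁ * λ₂)`
    (∀ (φ : A →ₐ[K] K) (lam₁ lam₂ : B →ₐ[K] K),
      charAct ρ.toLinearMap
          (charAct ρ.toLinearMap φ.toLinearMap lam₁.toLinearMap)
          lam₂.toLinearMap =
        charAct ρ.toLinearMap φ.toLinearMap
          (conv lam₁.toLinearMap lam₂.toLinearMap)) ∧
    -- `φ ← (η_K ∘ ε_B) = φ`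
    (∀ φ : A →ₐ[K] K,
      charAct ρ.toLinearMap φ.toLinearMap (Coalgebra.counit (R := K) (A := B)) =
        φ.toLinearMap) ∧
    -- `(φ₁ ⋆ φ₂) ← λ = (φ₁ ← λ) ⋆ (φ₂ ← λ)`
    (∀ (φ₁ φ₂ : A →ₐ[K] K) (lam : B →ₐ[K] K),
      charAct ρ.toLinearMap (conv φ₁.toLinearMap φ₂.toLinearMap)
          lam.toLinearMap =
        conv (charAct ρ.toLinearMap φ₁.toLinearMap lam.toLinearMap)
          (charAct ρ.toLinearMap φ₂.toLinearMap lam.toLinearMap)) := by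
  refine ⟨fun φ lam => ?_, fun φ l₁ l₂ => ?_, fun φ => ?_, fun φ₁ φ₂ lam => ?_⟩
  · have h : charAct ρ.toLinearMap φ.toLinearMap lam.toLinearMap =
        (((Algebra.TensorProduct.lmul' K (S := K)).comp
          (Algebra.TensorProduct.map φ lam)).comp ρ).toLinearMap := rfl
    rw [h]
    exact ⟨fun a b => map_mul (((Algebra.TensorProduct.lmul' K (S := K)).comp
          (Algebra.TensorProduct.map φ lam)).comp ρ) a b, map_one (((Algebra.TensorProduct.lmul' K (S := K)).comp
          (Algebra.TensorProduct.map φ lam)).comp ρ)⟩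
  · have h₁ : ∀ t : (A ⊗[K] B) ⊗[K] B,
        LinearMap.mul' K K (TensorProduct.map
          (LinearMap.mul' K K ∘ₗ TensorProduct.map φ.toLinearMap l₁.toLinearMap)
          l₂.toLinearMap t) =
        LinearMap.mul' K K (TensorProduct.map φ.toLinearMap
          (LinearMap.mul' K K ∘ₗ TensorProduct.map l₁.toLinearMap l₂.toLinearMap)
          (TensorProduct.assoc K A B B t)) := by
      intro t
      induction t with
      | zero => simp
      | add x y hx hy => simp only [map_add, hx, hy]
      | tmul x b =>
        induction x with
        | zero => simp
        | add x y hx hy => simp only [map_add, TensorProduct.add_tmul, hx, hy]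
        | tmul a c => simp [mul_assoc]
    ext a
    have h₂ := h₁ (TensorProduct.map ρ.toLinearMap LinearMap.id (ρ a))
    have h₃ := LinearMap.congr_fun hcoassoc a
    simp only [LinearMap.comp_apply, LinearEquiv.coe_coe, AlgHom.toLinearMap_apply] at h₃
    rw [h₃, ← LinearMap.comp_apply (TensorProduct.map _ _),
      ← TensorProduct.map_comp,
      ← LinearMap.comp_apply (TensorProduct.map _ _), ← TensorProduct.map_comp] at h₂
    exact h₂
  · have h₁ : ∀ t : A ⊗[K] B,
        LinearMap.mul' K K (TensorProduct.map φ.toLinearMap Coalgebra.counit t) =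
        φ (TensorProduct.rid K A (TensorProduct.map LinearMap.id Coalgebra.counit t)) := by
      intro t
      induction t with
      | zero => simp
      | add x y hx hy => simp only [map_add, hx, hy]
      | tmul x b => simp [mul_comm]
    ext a
    exact (h₁ (ρ a)).trans (congrArg φ (LinearMap.congr_fun hcounit a))
  · have h₁ : ∀ t : (A ⊗[K] B) ⊗[K] (A ⊗[K] B),
        LinearMap.mul' K K (TensorProduct.map
          (LinearMap.mul' K K ∘ₗ TensorProduct.map φ₁.toLinearMap φ₂.toLinearMap)
          lam.toLinearMap (TensorProduct.map LinearMap.id (LinearMap.mul' K B)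
            (TensorProduct.tensorTensorTensorComm K A B A B t))) =
        LinearMap.mul' K K (TensorProduct.map
          (LinearMap.mul' K K ∘ₗ TensorProduct.map φ₁.toLinearMap lam.toLinearMap)
          (LinearMap.mul' K K ∘ₗ TensorProduct.map φ₂.toLinearMap lam.toLinearMap) t) := by
      intro t
      induction t with
      | zero => simp
      | add x y hx hy => simp only [map_add, hx, hy]
      | tmul x y =>
        induction x with
        | zero => simp
        | add x z hx hz => simp only [map_add, TensorProduct.add_tmul, hx, hz]
        | tmul a b =>
          induction y with
          | zero => simp
          | add x z hx hz => simp only [map_add, TensorProduct.tmul_add, hx, hz]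
          | tmul c d =>
            simp
            ring
    ext a
    have h₂ := h₁ (TensorProduct.map ρ.toLinearMap ρ.toLinearMap (Coalgebra.comul a))
    have h₃ := LinearMap.congr_fun hcomp a
    simp only [LinearMap.comp_apply, LinearEquiv.coe_coe, AlgHom.toLinearMap_apply] at h₃
    rw [← h₃, ← LinearMap.comp_apply (TensorProduct.map _ _),
      ← TensorProduct.map_comp,
      ← LinearMap.comp_apply (TensorProduct.map _ _), ← TensorProduct.map_comp] at h₂
    exact h₂
end
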